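/- arXiv:2006.06230 — 2 statements merged into one kernel-verified Lean document; each statement's English description precedes it below -/
import Mathlib

section
/- For any irreducible closed subvariety X of the torus G_m^n over ℚ̄, the set X^{oa} is a Zariski open subset of X. -/
noncomputable section

abbrev Qbar : Type := AlgebraicClosure ℚ

/-- The absolute logarithmic Weil height of an algebraic number, via the
Mahler-measure formula applied to its (integer-scaled) minimal polynomial. -/
noncomputable def weilHeight (α : Qbar) : ℝ :=
  (Real.log (((minpoly ℚ α).support.lcm fun i => ((minpoly ℚ α).coeff i).den : ℕ) : ℝ) +
      (((minpoly ℚ α).aroots ℂ).map fun z => Real.log (max 1 ‖z‖)).sum) /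
    ((minpoly ℚ α).natDegree : ℝ)

/-- Points of the torus `G_m^n` over the algebraic numbers. -/
abbrev TorusPt (n : ℕ) : Type := Fin n → Qbarˣ

/-- Zariski-closed subsets of the torus: zero sets of families of polynomials. -/
def ZClosed {n : ℕ} (S : Set (TorusPt n)) : Prop :=
  ∃ I : Set (MvPolynomial (Fin n) Qbar),
    S = {x : TorusPt n | ∀ f ∈ I, MvPolynomial.eval (fun i => (x i : Qbar)) f = 0}

/-- Irreducibility (of a subset of the torus) for the Zariski topology. -/
def ZIrred {n : ℕ} (S : Set (TorusPt n)) : Prop :=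
  S.Nonempty ∧ ∀ Z₁ Z₂ : Set (TorusPt n), ZClosed Z₁ → ZClosed Z₂ →
    S ⊆ Z₁ ∪ Z₂ → S ⊆ Z₁ ∨ S ⊆ Z₂

/-- Dimension via lengths of chains of irreducible closed subsets. -/
def zdim {n : ℕ} (S : Set (TorusPt n)) : ℕ :=
  sSup {d : ℕ | ∃ Z : Fin (d + 1) → Set (TorusPt n),
    (∀ i, ZClosed (Z i) ∧ ZIrred (Z i) ∧ Z i ⊆ S) ∧
    ∀ i j : Fin (d + 1), i < j → Z i ⊂ Z j}

/-- An algebraic subgroup of the torus: a Zariski-closed subgroup. -/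
def IsAlgSubgroup {n : ℕ} (H : Set (TorusPt n)) : Prop :=
  ZClosed H ∧ (1 : TorusPt n) ∈ H ∧ (∀ x ∈ H, ∀ y ∈ H, x * y ∈ H) ∧ ∀ x ∈ H, x⁻¹ ∈ H

/-- A coset: a translate of an algebraic subgroup. -/
def IsCoset {n : ℕ} (C : Set (TorusPt n)) : Prop :=
  ∃ (g : TorusPt n) (H : Set (TorusPt n)), IsAlgSubgroup H ∧ C = (g * ·) '' H

/-- Zariski connectedness of a subset of the torus. -/
def ZConnected {n : ℕ} (H : Set (TorusPt n)) : Prop :=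
  ∀ Z₁ Z₂ : Set (TorusPt n), ZClosed Z₁ → ZClosed Z₂ → H ⊆ Z₁ ∪ Z₂ →
    H ∩ Z₁ ∩ Z₂ = ∅ → H ⊆ Z₁ ∨ H ⊆ Z₂

/-- `Y` is an `s`-anomalous subvariety of `X`. -/
def IsAnomalous {n : ℕ} (X Y : Set (TorusPt n)) (s : ℕ) : Prop :=
  Y ⊆ X ∧ ZClosed Y ∧ ZIrred Y ∧ 1 ≤ zdim Y ∧
    ∃ H : Set (TorusPt n), IsCoset H ∧ Y ⊆ H ∧
      (s : ℤ) + (zdim H : ℤ) - (n : ℤ) < (zdim Y : ℤ)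

/-- `X^{oa,s}` : the complement in `X` of the union of all `s`-anomalous subvarieties. -/
def openAnom {n : ℕ} (X : Set (TorusPt n)) (s : ℕ) : Set (TorusPt n) :=
  X \ ⋃ (Y : Set (TorusPt n)) (_ : IsAnomalous X Y s), Y

/-- `X` is defined over (the subfield) `K`: cut out by polynomials with coefficients in `K`. -/
def DefinedOver {n : ℕ} (K : IntermediateField ℚ Qbar) (X : Set (TorusPt n)) : Prop :=
  ∃ I : Set (MvPolynomial (Fin n) Qbar),
    (∀ f ∈ I, ∀ m, MvPolynomial.coeff m f ∈ K) ∧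
    X = {x : TorusPt n | ∀ f ∈ I, MvPolynomial.eval (fun i => (x i : Qbar)) f = 0}

def IsRootOfUnity (α : Qbar) : Prop := ∃ k : ℕ, 1 ≤ k ∧ α ^ k = 1

/-- The Bogomolov property for a subfield of the algebraic numbers. -/
def HasBogomolov (L : IntermediateField ℚ Qbar) : Prop :=
  ∃ C : ℝ, 0 < C ∧ ∀ α : Qbar, α ∈ L → α ≠ 0 → ¬ IsRootOfUnity α → C ≤ weilHeight α

/-!
It suffices that the union `A` of the `s`-anomalous subvarieties contains every point `p` of its
Zariski closure. A coset containing a subvariety `Y` is given by relations `ξ ^ m = c` between the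
coordinates of the generic point `ξ` of `Y`. Along the derivations of the function field of `Y`
these become linear relations, with constant coefficients, between logarithmic derivatives; `Y` is
`s`-anomalous when `dim Y ≥ 1` and the number of independent derivations plus the number of
independent relations exceeds `s`. Discarding some of them, only finitely many pairs of numbers
occur, so `p` lies in the closure of the union of the `Y` belonging to a single pair.

For an ultrafilter on these `Y` containing, for each polynomial nonzero at `p`, the set of `Y` on
which it does not vanish identically, the ultraproduct `ζ` of the generic points carries the same
number of derivations and relations, and every polynomial vanishing at `ζ` vanishes at `p`. The
coefficients of the relations need no longer be integers, only constants of the derivations. An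
inequality of Ax type still yields multiplicative relations. It rests on two facts: if forms
`dy / y` satisfy a linear relation whose constant coefficients are independent over `ℤ`, then, by
taking residues, the elements `y` are algebraic over the constants; and relations invariant under
the derivations have the same rank over the constants as over the whole field. Finally, impose the
equations `x ^ m = p ^ m` on the locus of `ζ` one at a time. By Krull's principal ideal theorem each
lowers the dimension by at most one, and a component through `p` is an `s`-anomalous subvariety of
`X`.
-/

open scoped TensorProduct

section AlgebraicOverSubrings

theorem isAlgebraic_of_range_algebraMap_le {R S A : Type*} [CommRing R] [CommRing S] [CommRing A]
    [Algebra R A] [Algebra S A] (hinj : Function.Injective (algebraMap R A))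
    (hle : (algebraMap R A).range ≤ (algebraMap S A).range) {x : A} (hx : IsAlgebraic R x) :
    IsAlgebraic S x := by
  obtain ⟨p, hp, hpx⟩ := hx
  have hlift : p.map (algebraMap R A) ∈ Polynomial.lifts (algebraMap S A) :=
    (Polynomial.lifts_iff_coeff_lifts _).2 fun n => by
      rw [Polynomial.coeff_map]
      exact hle ⟨p.coeff n, rfl⟩
  obtain ⟨q, hq⟩ := (Polynomial.mem_lifts _).1 hlift
  refine ⟨q, ?_, ?_⟩
  · rintro rfl
    rw [Polynomial.map_zero] at hq
    exact hp ((Polynomial.map_eq_zero_iff hinj).1 hq.symm)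
  · rw [← Polynomial.eval_map_algebraMap, hq, Polynomial.eval_map_algebraMap, hpx]

variable {K F : Type*} [Field K] [Field F] [Algebra K F]

theorem isTranscendenceBasis_singleton_adjoin_compl {ι : Type*} {x : ι → F}
    (hx : IsTranscendenceBasis K x) (i : ι) :
    IsTranscendenceBasis (IntermediateField.adjoin K (x '' {i}ᶜ)) (fun _ : Unit => x i) := by
  set M := IntermediateField.adjoin K (x '' {i}ᶜ)
  have htrans : Transcendental M (x i) := fun h =>
    hx.1.transcendental_adjoin (s := {i}ᶜ) (by simp) (IntermediateField.isAlgebraic_adjoin_iff.1 h)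
  have hrange : x '' {i}ᶜ ∪ {x i} = Set.range x := by
    rw [← Set.image_singleton, ← Set.image_union, Set.compl_union_self, Set.image_univ]
  have hle : (algebraMap (IntermediateField.adjoin K (Set.range x)) F).range ≤
      (algebraMap (IntermediateField.adjoin M {x i}) F).range := by
    rintro _ ⟨⟨z, hz⟩, rfl⟩
    rw [← hrange, ← IntermediateField.adjoin_adjoin_left] at hz
    exact ⟨⟨z, hz⟩, rfl⟩
  rw [isTranscendenceBasis_iff_algebraicIndependent_isAlgebraic]
  refine ⟨algebraicIndependent_unique_type_iff.2 htrans, ⟨fun z => ?_⟩⟩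
  rw [Set.range_const, ← IntermediateField.isAlgebraic_adjoin_iff]
  exact isAlgebraic_of_range_algebraMap_le Subtype.val_injective hle
    (hx.isAlgebraic_field.isAlgebraic z)

end AlgebraicOverSubrings

section Derivations

variable {K F : Type*} [Field K] [Field F] [Algebra K F]

theorem derivation_eq_zero_of_mem_adjoin {V : Type*} [AddCommGroup V] [Module K V] [Module F V]
    (D : Derivation K F V) {s : Set F} (hD : ∀ x ∈ s, D x = 0)
    {x : F} (hx : x ∈ IntermediateField.adjoin K s) : D x = 0 := by
  induction hx using IntermediateField.adjoin_induction with
  | mem x hx => exact hD x hx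
  | algebraMap x => exact D.map_algebraMap x
  | add x y _ _ hx hy => rw [map_add, hx, hy, add_zero]
  | inv x _ hx => rw [Derivation.leibniz_inv, hx, smul_zero]
  | mul x y _ _ hx hy => rw [Derivation.leibniz, hx, hy, smul_zero, smul_zero, add_zero]

/-- A derivation that vanishes on a field `M`, viewed as an `M`-linear derivation. -/
def extendScalarsDerivation {M V : Type*} [Field M] [Algebra M F]
    [AddCommGroup V] [Module K V] [Module F V] [Module M V] [IsScalarTower M F V]
    (D : Derivation K F V) (hD : ∀ c : M, D (algebraMap M F c) = 0) : Derivation M F V :=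
  Derivation.mk'
    { toFun := D
      map_add' := D.map_add
      map_smul' := fun c x => by
        rw [Algebra.smul_def, Derivation.leibniz, hD, smul_zero, add_zero, algebraMap_smul,
          RingHom.id_apply] }
    D.leibniz

@[simp]
theorem extendScalarsDerivation_apply {M V : Type*} [Field M] [Algebra M F]
    [AddCommGroup V] [Module K V] [Module F V] [Module M V] [IsScalarTower M F V]
    (D : Derivation K F V) (hD : ∀ c : M, D (algebraMap M F c) = 0) (x : F) :
    extendScalarsDerivation D hD x = D x := rfl

theorem derivation_eq_zero_of_isAlgebraic_adjoin [CharZero F] {V : Type*} [AddCommGroup V]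
    [Module K V] [Module F V] (D : Derivation K F V) {s : Set F} (hD : ∀ x ∈ s, D x = 0)
    {y : F} (hy : IsAlgebraic (IntermediateField.adjoin K s) y) : D y = 0 := by
  set M := IntermediateField.adjoin K s
  have hM : ∀ c : M, D (algebraMap M F c) = 0 := fun c => derivation_eq_zero_of_mem_adjoin D hD c.2
  have hmin : Polynomial.aeval y (Polynomial.derivative (minpoly M y)) • D y = 0 := by
    rw [← extendScalarsDerivation_apply D hM, ← Derivation.map_aeval, minpoly.aeval, map_zero]
  have hsep := (minpoly.irreducible hy.isIntegral).separable
  exact (smul_eq_zero.1 hmin).resolve_left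
    (hsep.aeval_derivative_ne_zero (minpoly.aeval M y))

theorem derivation_comp_algHom_eq [CharZero F] {A : Type*} [Field A] [Algebra K A]
    (D : Derivation K F F) (D' : Derivation K A A) (τ : F →ₐ[K] A) {s : Set F}
    (halg : Algebra.IsAlgebraic (IntermediateField.adjoin K s) F)
    (hs : ∀ x ∈ s, D' (τ x) = τ (D x)) (x : F) : D' (τ x) = τ (D x) := by
  let : Algebra F A := τ.toRingHom.toAlgebra
  have : IsScalarTower K F A := IsScalarTower.of_algebraMap_eq fun c => (τ.commutes c).symm
  let D₁ : Derivation K F A := D'.compAlgebraMap F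
  let D₂ : Derivation K F A := (Algebra.linearMap F A).compDer D
  exact sub_eq_zero.1 <| derivation_eq_zero_of_isAlgebraic_adjoin (D₁ - D₂)
    (fun y hy => sub_eq_zero.2 (hs y hy)) (halg.isAlgebraic x)

theorem formallyEtale_of_isTranscendenceBasis [CharZero F] {ι : Type*} {b : ι → F}
    (hb : IsTranscendenceBasis K b) :
    letI : Algebra (MvPolynomial ι K) F := (MvPolynomial.aeval b).toAlgebra
    Algebra.FormallyEtale (MvPolynomial ι K) F := by
  let : Algebra (MvPolynomial ι K) F := (MvPolynomial.aeval b).toAlgebra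
  have : FaithfulSMul (MvPolynomial ι K) F := (faithfulSMul_iff_algebraMap_injective _ _).2 hb.1
  let Q := FractionRing (MvPolynomial ι K)
  let : Algebra Q F := FractionRing.liftAlgebra _ _
  have : IsScalarTower (MvPolynomial ι K) Q F := FractionRing.isScalarTower_liftAlgebra _ _
  have : Algebra.IsAlgebraic (MvPolynomial ι K) F := by
    have := hb.isAlgebraic
    refine Algebra.IsAlgebraic.of_ringHom_of_comp_eq hb.1.aevalEquiv (RingHom.id F)
      hb.1.aevalEquiv.surjective Function.injective_id ?_
    exact RingHom.ext fun p => hb.1.algebraMap_aevalEquiv p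
  have : Algebra.IsAlgebraic Q F :=
    (IsFractionRing.comap_isAlgebraic_iff (A := MvPolynomial ι K)).1 inferInstance
  have : CharZero Q := (algebraMap Q F).charZero
  have : Algebra.FormallyEtale Q F := Algebra.FormallyEtale.of_isSeparable _ _
  have : Algebra.FormallyEtale (MvPolynomial ι K) Q :=
    Algebra.FormallyEtale.of_isLocalization (nonZeroDivisors (MvPolynomial ι K))
  exact Algebra.FormallyEtale.comp _ Q _

theorem exists_derivation_apply_basis_eq [CharZero F] {ι : Type*} {b : ι → F}
    (hb : IsTranscendenceBasis K b) (v : ι → F) :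
    ∃ D : Derivation K F F, ∀ i, D (b i) = v i := by
  let : Algebra (MvPolynomial ι K) F := (MvPolynomial.aeval b).toAlgebra
  have : IsScalarTower K (MvPolynomial ι K) F :=
    IsScalarTower.of_algebraMap_eq fun c => ((MvPolynomial.aeval b).commutes c).symm
  have := formallyEtale_of_isTranscendenceBasis hb
  let e := (KaehlerDifferential.tensorKaehlerEquivOfFormallyEtale K (MvPolynomial ι K) F).symm
  let l : F ⊗[MvPolynomial ι K] Ω[MvPolynomial ι K⁄K] →ₗ[F] F :=
    LinearMap.liftBaseChange F (MvPolynomial.mkDerivation K v).liftKaehlerDifferential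
  refine ⟨(l ∘ₗ e.toLinearMap).compDer (KaehlerDifferential.D K F), fun i => ?_⟩
  have hbi : b i = algebraMap (MvPolynomial ι K) F (MvPolynomial.X i) :=
    (MvPolynomial.aeval_X b i).symm
  rw [hbi]
  simp [e, l, KaehlerDifferential.tensorKaehlerEquivOfFormallyEtale_symm_D_algebraMap]

end Derivations

section LogarithmicDerivative

variable {K F : Type*} [Field K] [Field F] [Algebra K F] (D : Derivation K F F)

/-- The logarithmic derivative of `x` along the derivation `D`; it takes the value `0` at `0`. -/
def dlog (x : F) : F := D x / x

theorem dlog_eq_zero {x : F} (hx : D x = 0) : dlog D x = 0 := by rw [dlog, hx, zero_div]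

theorem dlog_mul {x y : F} (hx : x ≠ 0) (hy : y ≠ 0) :
    dlog D (x * y) = dlog D x + dlog D y := by
  simp only [dlog, Derivation.leibniz, smul_eq_mul]
  field_simp
  ring

theorem dlog_inv (x : F) : dlog D x⁻¹ = -dlog D x := by
  rcases eq_or_ne x 0 with rfl | hx
  · simp [dlog]
  · simp only [dlog, Derivation.leibniz_inv, smul_eq_mul]
    field_simp

theorem dlog_pow (x : F) (k : ℕ) : dlog D (x ^ k) = k * dlog D x := by
  rcases eq_or_ne x 0 with rfl | hx
  · rcases eq_or_ne k 0 with rfl | hk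
    · simp [dlog]
    · simp [dlog, hk]
  · induction k with
    | zero => simp [dlog]
    | succ k ih =>
      rw [pow_succ, dlog_mul D (pow_ne_zero _ hx) hx, ih, Nat.cast_succ, add_one_mul]

theorem dlog_zpow (x : F) (k : ℤ) : dlog D (x ^ k) = k * dlog D x := by
  obtain ⟨m, rfl | rfl⟩ := k.eq_nat_or_neg
  · rw [zpow_natCast, dlog_pow, Int.cast_natCast]
  · rw [zpow_neg, zpow_natCast, dlog_inv, dlog_pow, Int.cast_neg, Int.cast_natCast, neg_mul]

theorem dlog_prod {ι : Type*} (s : Finset ι) (f : ι → F) (hf : ∀ i ∈ s, f i ≠ 0) :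
    dlog D (∏ i ∈ s, f i) = ∑ i ∈ s, dlog D (f i) := by
  classical
  induction s using Finset.induction_on with
  | empty => simp [dlog]
  | insert a s ha ih =>
    have hs : ∀ i ∈ s, f i ≠ 0 := fun i hi => hf i (Finset.mem_insert_of_mem hi)
    rw [Finset.prod_insert ha, Finset.sum_insert ha,
      dlog_mul D (hf a (Finset.mem_insert_self _ _)) (Finset.prod_ne_zero_iff.2 hs), ih hs]

theorem dlog_map {A : Type*} [Field A] [Algebra K A] {D' : Derivation K A A} {τ : F →+* A}
    (hτ : ∀ x, D' (τ x) = τ (D x)) (x : F) : dlog D' (τ x) = τ (dlog D x) := by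
  rw [dlog, dlog, hτ, map_div₀]

end LogarithmicDerivative

section Residues

variable {K F : Type*} [Field K] [Field F] [Algebra K F]

/-- The elements of `F` of the form `t * p(t) / q(t)` with `q(0) ≠ 0`. For `t` transcendental over
`K` this is the maximal ideal of the local ring of `K(t)` at `t = 0`. -/
def vanishingAtZero (K : Type*) {F : Type*} [Field K] [Field F] [Algebra K F] (t : F) :
    Submodule K F where
  carrier := {z | ∃ p q : Polynomial K,
    q.eval 0 ≠ 0 ∧ z * Polynomial.aeval t q = t * Polynomial.aeval t p}
  zero_mem' := ⟨0, 1, by simp, by simp⟩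
  add_mem' := by
    rintro z w ⟨p, q, hq, hz⟩ ⟨p', q', hq', hw⟩
    refine ⟨p * q' + p' * q, q * q', by simp [hq, hq'], ?_⟩
    simp only [map_mul, map_add]
    linear_combination Polynomial.aeval t q' * hz + Polynomial.aeval t q * hw
  smul_mem' := by
    rintro c z ⟨p, q, hq, hz⟩
    refine ⟨Polynomial.C c * p, q, hq, ?_⟩
    simp only [map_mul, Polynomial.aeval_C, Algebra.smul_def]
    linear_combination algebraMap K F c * hz

variable {t : F}

theorem eq_zero_of_algebraMap_mem_vanishingAtZero (ht : Transcendental K t) {c : K}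
    (hc : algebraMap K F c ∈ vanishingAtZero K t) : c = 0 := by
  obtain ⟨p, q, hq, h⟩ := hc
  have hpoly : Polynomial.C c * q - Polynomial.X * p = 0 :=
    transcendental_iff.1 ht _ (by simp [h])
  simpa [hq] using congrArg (Polynomial.eval 0) hpoly

theorem exists_int_dlog_aeval_sub_mem_vanishingAtZero (ht : Transcendental K t)
    (D : Derivation K F F) (hD : D t = 1) {u : Polynomial K} (hu : u ≠ 0) :
    ∃ k : ℤ, t * dlog D (Polynomial.aeval t u) - k ∈ vanishingAtZero K t := by
  obtain ⟨v, hv, hndvd⟩ := Polynomial.exists_eq_pow_rootMultiplicity_mul_and_not_dvd u hu 0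
  have ht0 : t ≠ 0 := fun h => ht (h ▸ isAlgebraic_zero)
  have hv0 : v ≠ 0 := fun h => hndvd (h ▸ dvd_zero _)
  have hvt : Polynomial.aeval t v ≠ 0 := fun h => hv0 (transcendental_iff.1 ht _ h)
  refine ⟨u.rootMultiplicity 0, Polynomial.derivative v, v,
    fun h => hndvd (Polynomial.dvd_iff_isRoot.2 h), ?_⟩
  have hfactor : Polynomial.aeval t u = t ^ u.rootMultiplicity 0 * Polynomial.aeval t v := by
    conv_lhs => rw [hv]
    simp
  rw [hfactor, dlog_mul D (pow_ne_zero _ ht0) hvt, dlog_pow, dlog, dlog, Derivation.map_aeval, hD]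
  simp only [smul_eq_mul, mul_one]
  field_simp
  push_cast
  ring

theorem exists_int_dlog_sub_mem_vanishingAtZero (ht : Transcendental K t) (D : Derivation K F F)
    (hD : D t = 1) {x : F} (hx0 : x ≠ 0) (hx : x ∈ IntermediateField.adjoin K {t}) :
    ∃ k : ℤ, t * dlog D x - k ∈ vanishingAtZero K t := by
  obtain ⟨r, s, rfl⟩ := (IntermediateField.mem_adjoin_simple_iff _ _).1 hx
  rw [div_ne_zero_iff] at hx0
  have hne : ∀ {p : Polynomial K}, Polynomial.aeval t p ≠ 0 → p ≠ 0 := fun h hp =>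
    h (hp ▸ map_zero _)
  obtain ⟨k, hk⟩ := exists_int_dlog_aeval_sub_mem_vanishingAtZero ht D hD (hne hx0.1)
  obtain ⟨l, hl⟩ := exists_int_dlog_aeval_sub_mem_vanishingAtZero ht D hD (hne hx0.2)
  refine ⟨k - l, ?_⟩
  convert sub_mem hk hl using 1
  rw [div_eq_mul_inv, dlog_mul D hx0.1 (inv_ne_zero hx0.2), dlog_inv, Int.cast_sub]
  ring

theorem residue_eq_zero_of_sum_smul_dlog_eq_zero {β : Type*} [Fintype β] (ht : Transcendental K t)
    (D : Derivation K F F) {γ : β → K} (hγ : LinearIndependent ℤ γ) {x : β → F}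
    (h : ∑ b, γ b • dlog D (x b) = 0) {k : β → ℤ}
    (hk : ∀ b, t * dlog D (x b) - k b ∈ vanishingAtZero K t) : k = 0 := by
  have hmem : ∑ b, γ b • (t * dlog D (x b) - k b) ∈ vanishingAtZero K t :=
    Submodule.sum_mem _ fun b _ => Submodule.smul_mem _ _ (hk b)
  have hsum : ∑ b, γ b • (t * dlog D (x b) - k b) = algebraMap K F (-∑ b, k b • γ b) := by
    calc ∑ b, γ b • (t * dlog D (x b) - k b)
        = t * ∑ b, γ b • dlog D (x b) - ∑ b, γ b • (k b : F) := by
          simp only [smul_sub, Finset.sum_sub_distrib, Finset.mul_sum, mul_smul_comm]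
      _ = algebraMap K F (-∑ b, k b • γ b) := by
          rw [h, mul_zero, zero_sub]
          simp [Algebra.smul_def, mul_comm]
  rw [hsum] at hmem
  exact funext (Fintype.linearIndependent_iff.1 hγ k
    (neg_eq_zero.1 (eq_zero_of_algebraMap_mem_vanishingAtZero ht hmem)))

end Residues

section IndependenceOfDlogs

theorem dlog_norm {M L A : Type*} [Field M] [Field L] [Field A] [Algebra M L] [Algebra L A]
    [Algebra M A] [IsScalarTower M L A] [IsAlgClosed A] [CharZero L]
    {E : IntermediateField M L} {F : IntermediateField E L} [FiniteDimensional E F]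
    (D : Derivation M L L) {D' : Derivation M A A} {y : F} (hy : y ≠ 0)
    (hD' : ∀ x, D' (algebraMap L A x) = algebraMap L A (D x)) :
    algebraMap L A (dlog D (Algebra.norm E y : L)) = ∑ σ : F →ₐ[E] A, dlog D' (σ y) := by
  have : CharZero E := (algebraMap E L).charZero
  rw [← dlog_map D hD', ← dlog_prod D' _ _ fun σ _ => (map_ne_zero σ).2 hy]
  exact congrArg (dlog D') (Algebra.norm_eq_prod_embeddings E A y)

/-- Summing a relation over all conjugates turns it into a relation between norms. -/
theorem sum_smul_dlog_norm_eq_zero {M L A β : Type*} [Field M] [Field L] [Field A] [Algebra M L]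
    [Algebra L A] [Algebra M A] [IsScalarTower M L A] [IsAlgClosed A] [CharZero L] [Fintype β]
    {E : IntermediateField M L} [Algebra.IsAlgebraic E L]
    {F : IntermediateField E L} [FiniteDimensional E F]
    {D : Derivation M L L} {D' : Derivation M A A}
    (hD' : ∀ (τ : L →ₐ[E] A) (x : L), D' (τ x) = τ (D x))
    {γ : β → M} {y : β → F} (hy : ∀ b, y b ≠ 0) (h : ∑ b, γ b • dlog D (y b : L) = 0) :
    ∑ b, γ b • dlog D (Algebra.norm E (y b) : L) = 0 := by
  have hsmul : ∀ (τ : L →ₐ[E] A) (c : M) (x : L), τ (c • x) = c • τ x := fun τ =>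
    map_smul (τ.restrictScalars M)
  have hconj : ∀ σ : F →ₐ[E] A, ∑ b, γ b • dlog D' (σ (y b)) = 0 := by
    intro σ
    obtain ⟨τ, hτ⟩ := IsAlgClosed.surjective_domRestrict_of_isAlgebraic (E := L) σ
    have hστ : ∀ b, dlog D' (σ (y b)) = τ (dlog D (y b : L)) := fun b => by
      rw [← hτ]
      exact dlog_map (τ := (τ : L →+* A)) D (hD' τ) _
    simp only [hστ, ← hsmul, ← map_sum, h, map_zero]
  have hnorm : ∀ b, Algebra.algHom E L A (dlog D (Algebra.norm E (y b) : L)) =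
      ∑ σ : F →ₐ[E] A, dlog D' (σ (y b)) := fun b =>
    dlog_norm D (hy b) (hD' (Algebra.algHom E L A))
  refine (map_eq_zero (Algebra.algHom E L A)).1 ?_
  simp only [map_sum, hsmul, hnorm, Finset.smul_sum]
  rw [Finset.sum_comm]
  exact Finset.sum_eq_zero fun σ _ => hconj σ

theorem exists_intermediateField_isTranscendenceBasis_singleton {K L : Type*} [Field K] [Field L]
    [Algebra K L] {t : L} (ht : Transcendental K t) :
    ∃ M : IntermediateField K L, IsTranscendenceBasis M (fun _ : Unit => t) := by
  have hind : AlgebraicIndepOn K id {t} :=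
    (algebraicIndependent_unique_type_iff (ι := ({t} : Set L))).2 ht
  obtain ⟨s, hts, hs⟩ := exists_isTranscendenceBasis_superset hind
  exact ⟨_, isTranscendenceBasis_singleton_adjoin_compl hs ⟨t, hts rfl⟩⟩

/-- The residue at `t = 0` of the relation between the norms down to `M(t)` would be a nontrivial
integer relation between the coefficients, since the norm of `t` is a positive power of `t`. -/
theorem ne_of_sum_smul_dlog_eq_zero {M L β : Type*} [Field M] [Field L] [Algebra M L] [CharZero L]
    [Fintype β] {t : L} (ht : IsTranscendenceBasis M (fun _ : Unit => t))
    {γ : β → M} (hγ : LinearIndependent ℤ γ) {y : β → L} (hy : ∀ b, y b ≠ 0)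
    (h : ∀ D : Derivation M L L, ∑ b, γ b • dlog D (y b) = 0) (b₀ : β) : y b₀ ≠ t := by
  intro hb₀
  have htrans : Transcendental M t := algebraicIndependent_unique_type_iff.1 ht.1
  have ht0 : t ≠ 0 := fun h => htrans (h ▸ isAlgebraic_zero)
  have : CharZero M := (algebraMap M L).charZero_iff (algebraMap M L).injective |>.2 inferInstance
  have hL := ht.isAlgebraic_field
  rw [Set.range_const] at hL
  set E := IntermediateField.adjoin M {t}
  let A := AlgebraicClosure L
  obtain ⟨D, hD⟩ := exists_derivation_apply_basis_eq ht fun _ => 1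
  obtain ⟨D', hD'⟩ := exists_derivation_apply_basis_eq (ht.algebraMap_comp (A := A)) fun _ => 1
  let tE : E := ⟨t, IntermediateField.mem_adjoin_simple_self M t⟩
  have hcomm : ∀ (τ : L →ₐ[E] A) (x : L), D' (τ x) = τ (D x) := fun τ =>
    derivation_comp_algHom_eq D D' (τ.restrictScalars M) hL fun x hx => by
      calc D' (τ x) = D' (algebraMap L A t) := by rw [hx]; exact congrArg D' (τ.commutes tE)
        _ = τ (D x) := by rw [hx, hD (), map_one]; exact hD' ()
  let F := IntermediateField.adjoin E (Set.range y)
  have : FiniteDimensional E F :=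
    IntermediateField.finiteDimensional_adjoin fun x _ => (hL.isAlgebraic x).isIntegral
  let Y : β → F := fun b => ⟨y b, IntermediateField.subset_adjoin _ _ ⟨b, rfl⟩⟩
  have hY : ∀ b, Y b ≠ 0 := fun b hb => hy b (congrArg Subtype.val hb)
  have hrel := sum_smul_dlog_norm_eq_zero hcomm hY (h D)
  choose k hk using fun b => exists_int_dlog_sub_mem_vanishingAtZero htrans D (hD ())
    (x := (Algebra.norm E (Y b) : L)) (by simpa using hY b) (Algebra.norm E (Y b)).2
  have hk0 := residue_eq_zero_of_sum_smul_dlog_eq_zero htrans D hγ hrel hk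
  have hYb₀ : Y b₀ = algebraMap E F tE := Subtype.ext hb₀
  have hnorm : algebraMap M L (Module.finrank E F) ∈ vanishingAtZero M t := by
    have := hk b₀
    rw [hk0, hYb₀, Algebra.norm_algebraMap, SubmonoidClass.coe_pow, dlog_pow, dlog, hD ()] at this
    simpa [tE, mul_left_comm t, ht0] using this
  exact Module.finrank_pos.ne' (Nat.cast_eq_zero.1
    (eq_zero_of_algebraMap_mem_vanishingAtZero htrans hnorm))

theorem isAlgebraic_of_sum_smul_dlog_eq_zero {K L β : Type*} [Field K] [Field L] [Algebra K L]
    [CharZero L] [Fintype β] {γ : β → K} (hγ : LinearIndependent ℤ γ) {y : β → L}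
    (hy : ∀ b, y b ≠ 0) (h : ∀ D : Derivation K L L, ∑ b, γ b • dlog D (y b) = 0) (b : β) :
    IsAlgebraic K (y b) := by
  by_contra htrans
  obtain ⟨M, hM⟩ := exists_intermediateField_isTranscendenceBasis_singleton htrans
  have hγM : LinearIndependent ℤ fun b => algebraMap K M (γ b) :=
    hγ.map' (algebraMap K M).toAddMonoidHom.toIntLinearMap
      (LinearMap.ker_eq_bot.2 (algebraMap K M).injective)
  refine ne_of_sum_smul_dlog_eq_zero hM hγM hy (fun D => ?_) b rfl
  simp only [algebraMap_smul]
  exact h (D.restrictScalars K)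

end IndependenceOfDlogs

section LaurentMonomials

variable {L ι : Type*} [Fintype ι] [Field L]

/-- The Laurent monomial `∏ i, ξ i ^ m i` with integer exponents `m`, evaluated at `ξ`. -/
def laurentMonomial (ξ : ι → L) (m : ι → ℤ) : L := ∏ i, ξ i ^ m i

theorem laurentMonomial_ne_zero {ξ : ι → L} (hξ : ∀ i, ξ i ≠ 0) (m : ι → ℤ) :
    laurentMonomial ξ m ≠ 0 := Finset.prod_ne_zero_iff.2 fun i _ => zpow_ne_zero _ (hξ i)

theorem laurentMonomial_add {ξ : ι → L} (hξ : ∀ i, ξ i ≠ 0) (m m' : ι → ℤ) :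
    laurentMonomial ξ (m + m') = laurentMonomial ξ m * laurentMonomial ξ m' := by
  simp only [laurentMonomial, ← Finset.prod_mul_distrib, Pi.add_apply, zpow_add₀ (hξ _)]

theorem laurentMonomial_zsmul (ξ : ι → L) (r : ℤ) (m : ι → ℤ) :
    laurentMonomial ξ (r • m) = laurentMonomial ξ m ^ r := by
  simp only [laurentMonomial, Pi.smul_apply, smul_eq_mul, ← Finset.prod_zpow, mul_comm r, zpow_mul]

variable {K : Type*} [Field K] [Algebra K L]

theorem dlog_laurentMonomial (D : Derivation K L L) {ξ : ι → L} (hξ : ∀ i, ξ i ≠ 0) (m : ι → ℤ) :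
    dlog D (laurentMonomial ξ m) = ∑ i, (m i : L) * dlog D (ξ i) := by
  rw [laurentMonomial, dlog_prod D _ _ fun i _ => zpow_ne_zero _ (hξ i)]
  exact Finset.sum_congr rfl fun i _ => dlog_zpow D _ _

theorem mem_span_of_sum_smul_dlog_eq_zero [CharZero L] {ξ : ι → L} (hξ : ∀ i, ξ i ≠ 0) (c : ι → K)
    (h : ∀ D : Derivation K L L, ∑ i, c i • dlog D (ξ i) = 0) :
    c ∈ Submodule.span K
      ((fun (m : ι → ℤ) i => (m i : K)) '' {m | IsAlgebraic K (laurentMonomial ξ m)}) := by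
  have : CharZero K := (algebraMap K L).charZero_iff (algebraMap K L).injective |>.2 inferInstance
  let V := Submodule.span ℤ (Set.range c)
  have : Module.Finite ℤ V := Module.Finite.span_of_finite ℤ (Set.finite_range c)
  let B := Module.Free.chooseBasis ℤ V
  let γ : Module.Free.ChooseBasisIndex ℤ V → K := fun b => (B b : K)
  have hγ : LinearIndependent ℤ γ := B.linearIndependent.map' V.subtype V.ker_subtype
  let m : Module.Free.ChooseBasisIndex ℤ V → ι → ℤ := fun b i =>
    B.repr ⟨c i, Submodule.subset_span ⟨i, rfl⟩⟩ b
  have hc : c = ∑ b, γ b • fun i => (m b i : K) := by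
    ext i
    have hci := congrArg V.subtype (B.sum_repr ⟨c i, Submodule.subset_span ⟨i, rfl⟩⟩)
    rw [map_sum] at hci
    simp only [Finset.sum_apply, Pi.smul_apply, smul_eq_mul]
    refine hci.symm.trans (Finset.sum_congr rfl fun b _ => ?_)
    rw [map_smul, zsmul_eq_mul, mul_comm]
    rfl
  have halg := isAlgebraic_of_sum_smul_dlog_eq_zero hγ
    (fun b => laurentMonomial_ne_zero hξ (m b)) fun D => by
      rw [← h D, hc]
      simp only [dlog_laurentMonomial D hξ, Finset.sum_apply, Pi.smul_apply, smul_eq_mul,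
        Finset.sum_smul, Finset.smul_sum, mul_smul]
      rw [Finset.sum_comm]
      simp only [← zsmul_eq_mul, Int.cast_smul_eq_zsmul]
  rw [hc]
  exact Submodule.sum_mem _ fun b _ =>
    Submodule.smul_mem _ _ (Submodule.subset_span ⟨m b, halg b, rfl⟩)

end LaurentMonomials

section TranscendenceDegree

open AlgebraicIndependent (matroid)

/-- The transcendence degree of a subset `s` of a field extension of `k`, as the rank of `s` in the
matroid of algebraic independence. It is meant for finite `s`: an infinite rank is sent to `0`. -/
def trdegSet (k : Type*) {L : Type*} [Field k] [Field L] [Algebra k L] (s : Set L) : ℕ :=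
  ((matroid k L).eRk s).toNat

variable {k L : Type*} [Field k] [Field L] [Algebra k L] {s t : Set L}

theorem natCast_trdegSet (hs : s.Finite) : (trdegSet k s : ℕ∞) = (matroid k L).eRk s :=
  ENat.natCast_toNat
    (((matroid k L).eRk_le_encard s).trans_lt (Set.encard_lt_top_iff.2 hs)).ne

theorem trdegSet_mono (ht : t.Finite) (h : s ⊆ t) : trdegSet k s ≤ trdegSet k t := by
  have hle := (matroid k L).eRk_mono h
  rw [← natCast_trdegSet (ht.subset h), ← natCast_trdegSet ht] at hle
  exact_mod_cast hle

theorem trdegSet_le_ncard (hs : s.Finite) : trdegSet k s ≤ s.ncard := by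
  have hle := (matroid k L).eRk_le_encard s
  rw [← natCast_trdegSet hs, ← hs.cast_ncard_eq] at hle
  exact_mod_cast hle

theorem ncard_le_trdegSet {I : Set L} (hs : s.Finite) (hI : AlgebraicIndepOn k id I)
    (hIs : I ⊆ s) : I.ncard ≤ trdegSet k s := by
  have hle := (AlgebraicIndependent.matroid_indep_iff.2 hI).encard_le_eRk_of_subset hIs
  rw [← natCast_trdegSet hs, ← (hs.subset hIs).cast_ncard_eq] at hle
  exact_mod_cast hle

theorem trdegSet_le_of_isAlgebraic (hs : s.Finite) (ht : t.Finite)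
    (h : ∀ a ∈ s, IsAlgebraic (Algebra.adjoin k t) a) : trdegSet k s ≤ trdegSet k t := by
  have hcl : s ⊆ (matroid k L).closure t := by
    rw [AlgebraicIndependent.matroid_closure_eq]
    exact h
  have hle := (matroid k L).eRk_mono hcl
  rw [Matroid.eRk_closure_eq, ← natCast_trdegSet hs, ← natCast_trdegSet ht] at hle
  exact_mod_cast hle

theorem isAlgebraic_of_mem_adjoin {a : L} (h : a ∈ IntermediateField.adjoin k t) :
    IsAlgebraic (Algebra.adjoin k t) a :=
  IntermediateField.isAlgebraic_adjoin_iff.1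
    (isAlgebraic_algebraMap (⟨a, h⟩ : IntermediateField.adjoin k t))

theorem ncard_eq_trdegSet {I : Set L} (hs : s.Finite) (hI : (matroid k L).IsBasis I s) :
    I.ncard = trdegSet k s := by
  have henc := hI.encard_eq_eRk
  rw [← natCast_trdegSet hs, ← (hs.subset hI.subset).cast_ncard_eq] at henc
  exact_mod_cast henc

theorem exists_algebraicIndepOn_ncard_eq_trdegSet (hs : s.Finite) : ∃ I ⊆ s,
    AlgebraicIndepOn k id I ∧ (∀ a ∈ s, IsAlgebraic (Algebra.adjoin k I) a) ∧
      I.ncard = trdegSet k s := by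
  obtain ⟨I, hI⟩ := (matroid k L).exists_isBasis s
  obtain ⟨hind, hIs, halg⟩ := AlgebraicIndependent.matroid_isBasis_iff.1 hI
  exact ⟨I, hIs, hind, halg, ncard_eq_trdegSet hs hI⟩

theorem exists_ncard_add_trdegSet_eq (hs : s.Finite) (ht : t.Finite)
    (hst : s ⊆ IntermediateField.adjoin k t) :
    ∃ J ⊆ t, J.ncard + trdegSet k s = trdegSet k t ∧
      ∀ a ∈ t, IsAlgebraic (IntermediateField.adjoin k (s ∪ J)) a := by
  obtain ⟨I, hI⟩ := (matroid k L).exists_isBasis s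
  obtain ⟨B, hB, hIB⟩ :=
    hI.indep.subset_isBasis_of_subset (X := s ∪ t) (hI.subset.trans Set.subset_union_left)
  obtain ⟨-, hBst, halg⟩ := AlgebraicIndependent.matroid_isBasis_iff.1 hB
  have hfin : (s ∪ t).Finite := hs.union ht
  have hunion : trdegSet k (s ∪ t) = trdegSet k t := by
    refine le_antisymm (trdegSet_le_of_isAlgebraic hfin ht ?_)
      (trdegSet_mono hfin Set.subset_union_right)
    rintro a (ha | ha)
    · exact isAlgebraic_of_mem_adjoin (hst ha)
    · exact isAlgebraic_of_mem_adjoin (IntermediateField.subset_adjoin _ _ ha)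
  refine ⟨B \ I, fun x hx => ?_, ?_, fun a ha => ?_⟩
  · exact (hBst hx.1).resolve_left fun hxs => hx.2 <|
      hI.mem_of_insert_indep hxs (hB.indep.subset (Set.insert_subset hx.1 hIB))
  · rw [← ncard_eq_trdegSet hs hI, ← hunion, ← ncard_eq_trdegSet hfin hB]
    exact Set.ncard_sdiff_add_ncard_of_subset hIB (hfin.subset hBst)
  · have hle : IntermediateField.adjoin k B ≤ IntermediateField.adjoin k (s ∪ B \ I) :=
      IntermediateField.adjoin.mono _ _ _ fun x hx =>
        (em (x ∈ I)).imp (fun h => hI.subset h) fun h => ⟨hx, h⟩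
    refine isAlgebraic_of_range_algebraMap_le Subtype.val_injective ?_
      (IntermediateField.isAlgebraic_adjoin_iff.2 (halg a (Or.inr ha)))
    rintro _ ⟨r, rfl⟩
    exact ⟨⟨r, hle r.2⟩, rfl⟩

end TranscendenceDegree

section LogarithmicForms

variable (K : Type*) {L ι : Type*} [Field K] [Field L] [Algebra K L] [Fintype ι]

/-- The logarithmic differential form `∑ a, c a • dξ_a / ξ_a` with coefficients `c`, encoded as the
functional `D ↦ ∑ a, c a * dlog D (ξ a)` on the `K`-derivations of `L`. -/
def dlogForm (ξ : ι → L) : (ι → L) →ₗ[L] (Derivation K L L →ₗ[L] L) :=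
  Fintype.linearCombination L fun a =>
    { toFun := fun D => dlog D (ξ a)
      map_add' := fun _ _ => add_div ..
      map_smul' := fun _ _ => mul_div_assoc .. }

variable {K}

theorem dlogForm_apply (ξ c : ι → L) (D : Derivation K L L) :
    dlogForm K ξ c D = ∑ a, c a * dlog D (ξ a) := by
  simp only [dlogForm, Fintype.linearCombination_apply, LinearMap.sum_apply, LinearMap.smul_apply,
    smul_eq_mul]
  rfl

theorem dlogForm_apply_eq_zero (c : ι → L) {ξ : ι → L} {D : Derivation K L L}
    (hD : ∀ a, D (ξ a) = 0) : dlogForm K ξ c D = 0 := by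
  simp only [dlogForm_apply, dlog_eq_zero D (hD _), mul_zero, Finset.sum_const_zero]

theorem dlog_commutator (D D' : Derivation K L L) {x : L} (hx : x ≠ 0) :
    dlog ⁅D, D'⁆ x = D (dlog D' x) - D' (dlog D x) := by
  simp only [dlog, Derivation.commutator_apply, div_eq_mul_inv, Derivation.leibniz,
    Derivation.leibniz_inv, smul_eq_mul]
  field_simp
  ring

/-- A closed form killed by `D` has zero Lie derivative along `D`. -/
theorem dlogForm_commutator {ξ : ι → L} (hξ : ∀ i, ξ i ≠ 0) (c : ι → K)
    {D : Derivation K L L} (hD : dlogForm K ξ (algebraMap K L ∘ c) D = 0) (D' : Derivation K L L) :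
    dlogForm K ξ (algebraMap K L ∘ c) ⁅D, D'⁆ = D (dlogForm K ξ (algebraMap K L ∘ c) D') := by
  have hmap : ∀ D₁ D₂ : Derivation K L L, D₁ (dlogForm K ξ (algebraMap K L ∘ c) D₂) =
      ∑ a, algebraMap K L (c a) * D₁ (dlog D₂ (ξ a)) := fun D₁ D₂ => by
    simp [dlogForm_apply, Derivation.leibniz]
  rw [← sub_zero (D _), ← map_zero D', ← hD, hmap, hmap, dlogForm_apply, ← Finset.sum_sub_distrib]
  simp only [Function.comp_apply, dlog_commutator D D' (hξ _), mul_sub]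

variable {β κ γ : Type*} {D : β → Derivation K L L}

theorem apply_coeff_eq_zero_of_commutator [Fintype κ] {v : κ → Derivation K L L →ₗ[L] L}
    (hv : LinearIndependent L v) {D : Derivation K L L} (hD : ∀ i D', v i ⁅D, D'⁆ = D (v i D'))
    {A : κ → L} (hA : ∀ D', ∑ i, A i * v i ⁅D, D'⁆ = D (∑ i, A i * v i D')) (i : κ) :
    D (A i) = 0 := by
  refine Fintype.linearIndependent_iff.1 hv (fun i => D (A i)) (LinearMap.ext fun D' => ?_) i
  have h := hA D'
  simp only [map_sum, Derivation.leibniz, smul_eq_mul, hD, Finset.sum_add_distrib,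
    left_eq_add] at h
  simpa [mul_comm] using h

/-- The forms `w i` are invariant under the derivations `D j`, so that the coefficients expressing
them in a basis chosen among them are constants. -/
theorem finrank_span_le_finrank_span_of_commutator [Finite γ]
    (hconst : ∀ x : L, (∀ j, D j x = 0) → x ∈ Set.range (algebraMap K L))
    {w : γ → Derivation K L L →ₗ[L] L} (hw : ∀ i j D', w i ⁅D j, D'⁆ = D j (w i D')) :
    Module.finrank K (Submodule.span K (Set.range w)) ≤
      Module.finrank L (Submodule.span L (Set.range w)) := by
  obtain ⟨κ, e, he, hspan, hind⟩ := exists_linearIndependent' L w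
  have : Finite κ := Finite.of_injective e he
  have := Fintype.ofFinite κ
  have hle : Submodule.span K (Set.range w) ≤ Submodule.span K (Set.range (w ∘ e)) := by
    rw [Submodule.span_le]
    rintro _ ⟨i, rfl⟩
    have hi : w i ∈ Submodule.span L (Set.range (w ∘ e)) :=
      hspan ▸ Submodule.subset_span ⟨i, rfl⟩
    obtain ⟨A, hA⟩ := (Submodule.mem_span_range_iff_exists_fun L).1 hi
    have hwA : ∀ D', ∑ l, A l * (w ∘ e) l D' = w i D' := fun D' => by simp [← hA]
    choose B hB using fun l => hconst (A l) fun j =>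
      apply_coeff_eq_zero_of_commutator hind (fun l => hw (e l) j)
        (fun D' => by rw [hwA, hwA, hw]) l
    rw [SetLike.mem_coe, ← hA]
    refine Submodule.sum_mem _ fun l _ => ?_
    rw [← hB l, algebraMap_smul]
    exact Submodule.smul_mem _ _ (Submodule.subset_span ⟨l, rfl⟩)
  have : Module.Finite K (Submodule.span K (Set.range (w ∘ e))) :=
    Module.Finite.span_of_finite K (Set.finite_range _)
  calc Module.finrank K (Submodule.span K (Set.range w))
    _ ≤ Module.finrank K (Submodule.span K (Set.range (w ∘ e))) := Submodule.finrank_mono hle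
    _ ≤ Fintype.card κ := finrank_range_le_card _
    _ = Module.finrank L (Submodule.span L (Set.range w)) := by
      rw [← hspan, finrank_span_eq_card hind]

end LogarithmicForms

section AxInequality

section AlgebraicConstants

theorem finrank_range_comp_add_finrank_le {L U V W : Type*} [Field L] [AddCommGroup U] [Module L U]
    [AddCommGroup V] [Module L V] [AddCommGroup W] [Module L W] [FiniteDimensional L U]
    (f : U →ₗ[L] V) (g : V →ₗ[L] W) {N : Submodule L V} (hNf : N ≤ LinearMap.range f)
    (hNg : N ≤ LinearMap.ker g) :
    Module.finrank L (LinearMap.range (g ∘ₗ f)) + Module.finrank L N ≤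
      Module.finrank L (LinearMap.range f) := by
  let R := LinearMap.range f
  have hker : N ≤ (LinearMap.ker (g.domRestrict R)).map R.subtype := fun w hw =>
    ⟨⟨w, hNf hw⟩, hNg hw, rfl⟩
  rw [← LinearMap.finrank_range_add_finrank_ker (g.domRestrict R), LinearMap.range_domRestrict,
    LinearMap.range_comp, ← Submodule.finrank_map_subtype_eq R]
  exact Nat.add_le_add_left (Submodule.finrank_mono hker) _

theorem finrank_span_intCast_image_le {K ι : Type*} [Field K] [Finite ι]
    (Λ : Submodule ℤ (ι → ℤ)) :
    Module.finrank K (Submodule.span K ((fun (m : ι → ℤ) i => (m i : K)) '' Λ)) ≤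
      Module.finrank ℤ Λ := by
  have := Fintype.ofFinite ι
  let B := Module.finBasis ℤ Λ
  let J : (ι → ℤ) →ₗ[ℤ] (ι → K) := (Algebra.linearMap ℤ K).compLeft ι
  have hΛ : Submodule.span ℤ (Set.range (J ∘ Λ.subtype ∘ B)) = Λ.map J := by
    rw [Set.range_comp, ← Submodule.map_span, Set.range_comp, ← Submodule.map_span, B.span_eq,
      Submodule.map_subtype_top]
  have himage : (fun (m : ι → ℤ) i => (m i : K)) '' Λ = Λ.map J := rfl
  rw [himage, ← hΛ, Submodule.span_span_of_tower]
  exact (finrank_range_le_card _).trans_eq (Fintype.card_fin _)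

theorem exists_linearIndependent_fin_finrank {ι : Type*} [Finite ι] (Λ : Submodule ℤ (ι → ℤ)) :
    ∃ m : Fin (Module.finrank ℤ Λ) → ι → ℤ, LinearIndependent ℤ m ∧ ∀ j, m j ∈ Λ :=
  let B := Module.finBasis ℤ Λ
  ⟨fun j => B j, B.linearIndependent.map' Λ.subtype Λ.ker_subtype, fun j => (B j).2⟩

variable {k K L ι : Type*} [Field k] [Field K] [Field L] [Algebra k K] [Algebra K L] [Algebra k L]
  [IsScalarTower k K L] [Fintype ι] {ξ : ι → L}

theorem laurentMonomial_mem (M : IntermediateField k L) (h : ∀ i, ξ i ∈ M) (m : ι → ℤ) :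
    laurentMonomial ξ m ∈ M :=
  prod_mem fun i _ => zpow_mem (h i) _

theorem isAlgebraic_zpow {x : L} (hx : IsAlgebraic K x) (r : ℤ) : IsAlgebraic K (x ^ r) := by
  rcases r with r | r
  · exact (zpow_natCast x r).symm ▸ hx.pow r
  · exact (zpow_negSucc x r).symm ▸ (hx.pow (r + 1)).inv

variable (K) in
/-- The lattice of integer exponents `m` for which `ξ ^ m` is algebraic over `K`. -/
def algebraicExponents (hξ : ∀ i, ξ i ≠ 0) : Submodule ℤ (ι → ℤ) where
  carrier := {m | IsAlgebraic K (laurentMonomial ξ m)}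
  add_mem' {m m'} hm hm' := by
    rw [Set.mem_ofPred_eq, laurentMonomial_add hξ]
    exact hm.mul hm'
  zero_mem' := by simpa [laurentMonomial] using isAlgebraic_one
  smul_mem' r m hm := by
    rw [Set.mem_ofPred_eq, laurentMonomial_zsmul]
    exact isAlgebraic_zpow hm r

theorem card_le_finrank_span_add_finrank_algebraicExponents [CharZero L] {γ : Type*} [Fintype γ]
    (hξ : ∀ i, ξ i ≠ 0) {c : γ → ι → K} (hc : LinearIndependent K c) :
    Fintype.card γ ≤
      Module.finrank K (Submodule.span K
        (Set.range fun j => dlogForm K ξ (algebraMap K L ∘ c j))) +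
      Module.finrank ℤ (algebraicExponents K hξ) := by
  let Ω : (ι → K) →ₗ[K] (Derivation K L L →ₗ[L] L) :=
    (dlogForm K ξ).restrictScalars K ∘ₗ (Algebra.linearMap K L).compLeft ι
  let V := Submodule.span K (Set.range c)
  have hker : (LinearMap.ker (Ω.domRestrict V)).map V.subtype ≤
      Submodule.span K ((fun (m : ι → ℤ) i => (m i : K)) '' algebraicExponents K hξ) := by
    rintro _ ⟨v, hv, rfl⟩
    refine mem_span_of_sum_smul_dlog_eq_zero hξ _ fun D => ?_
    have hvD : dlogForm K ξ (algebraMap K L ∘ v.1) D = 0 := LinearMap.congr_fun hv D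
    simp only [dlogForm_apply, Function.comp_apply, ← Algebra.smul_def] at hvD
    exact hvD
  calc Fintype.card γ
    _ = Module.finrank K V := (finrank_span_eq_card hc).symm
    _ = Module.finrank K (V.map Ω) + Module.finrank K (LinearMap.ker (Ω.domRestrict V)) := by
      rw [← LinearMap.finrank_range_add_finrank_ker (Ω.domRestrict V), LinearMap.range_domRestrict]
    _ ≤ _ := by
      refine Nat.add_le_add (le_of_eq ?_) ?_
      · rw [Submodule.map_span, ← Set.range_comp]
        rfl
      · rw [← Submodule.finrank_map_subtype_eq]
        exact (Submodule.finrank_mono hker).trans (finrank_span_intCast_image_le _)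

theorem card_add_finrank_le_finrank_range_dlogForm {β : Type*} [Fintype β]
    {D : β → Derivation K L L} (hD : LinearIndependent L fun j a => dlog (D j) (ξ a))
    {N : Submodule L (Derivation K L L →ₗ[L] L)} (hN : N ≤ LinearMap.range (dlogForm K ξ))
    (hND : ∀ w ∈ N, ∀ j, w (D j) = 0) :
    Fintype.card β + Module.finrank L N ≤ Module.finrank L (LinearMap.range (dlogForm K ξ)) := by
  let ev : (Derivation K L L →ₗ[L] L) →ₗ[L] (β → L) :=
    LinearMap.pi fun j => LinearMap.applyₗ (D j)
  let U : Matrix β ι L := Matrix.of fun j a => dlog (D j) (ξ a)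
  have hU : ev ∘ₗ dlogForm K ξ = U.mulVecLin := LinearMap.ext fun v => funext fun j => by
    change dlogForm K ξ v (D j) = _
    simp [dlogForm_apply, U, Matrix.mulVec, dotProduct, mul_comm]
  have hrank : Module.finrank L (LinearMap.range (ev ∘ₗ dlogForm K ξ)) = Fintype.card β := by
    rw [hU]
    exact LinearIndependent.rank_matrix (M := U) hD
  rw [← hrank]
  exact finrank_range_comp_add_finrank_le _ ev hN fun w hw => funext fun j => hND w hw j

theorem derivation_eq_zero_of_isAlgebraic [CharZero L] (D : Derivation K L L) {x : L}
    (hx : IsAlgebraic K x) : D x = 0 :=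
  derivation_eq_zero_of_isAlgebraic_adjoin D (s := ∅) (fun _ h => h.elim) (hx.tower_top _)

theorem finrank_range_dlogForm_add_trdegSet_le [CharZero L] {ρ : Type*} [Finite ρ]
    {m : ρ → ι → ℤ} (hm : ∀ j, IsAlgebraic K (laurentMonomial ξ (m j))) :
    Module.finrank L (LinearMap.range (dlogForm K ξ)) +
      trdegSet k (Set.range fun j => laurentMonomial ξ (m j)) ≤ trdegSet k (Set.range ξ) := by
  have hmem : (Set.range fun j => laurentMonomial ξ (m j)) ⊆
      IntermediateField.adjoin k (Set.range ξ) := Set.range_subset_iff.2 fun j =>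
    laurentMonomial_mem _ (fun i => IntermediateField.subset_adjoin k _ (Set.mem_range_self i)) _
  obtain ⟨J, hJ, hJcard, hJalg⟩ :=
    exists_ncard_add_trdegSet_eq (Set.finite_range _) (Set.finite_range ξ) hmem
  have := ((Set.finite_range ξ).subset hJ).fintype
  let ev : J → (Derivation K L L →ₗ[L] L) := fun x =>
    { toFun := fun D => D x, map_add' := fun _ _ => rfl, map_smul' := fun _ _ => rfl }
  have hle : LinearMap.range (dlogForm K ξ) ≤ Submodule.span L (Set.range ev) := by
    rintro _ ⟨v, rfl⟩
    refine mem_span_of_iInf_ker_le_ker fun D hD => dlogForm_apply_eq_zero v fun a => ?_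
    rw [Submodule.mem_iInf] at hD
    refine derivation_eq_zero_of_isAlgebraic_adjoin (D.restrictScalars k) ?_ (hJalg _ ⟨a, rfl⟩)
    rintro x (⟨j, rfl⟩ | hx)
    · exact derivation_eq_zero_of_isAlgebraic D (hm j)
    · exact hD ⟨x, hx⟩
  have : Module.Finite L (Submodule.span L (Set.range ev)) :=
    Module.Finite.span_of_finite L (Set.finite_range _)
  rw [← hJcard, ← Nat.card_coe_set_eq, Nat.card_eq_fintype_card]
  exact Nat.add_le_add_right ((Submodule.finrank_mono hle).trans (finrank_range_le_card _)) _

/-- The inequality of Ax type that trades linear relations with constant coefficients for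
multiplicative relations. -/
theorem exists_trdegSet_laurentMonomial_add_card_le_of_dlogForm [CharZero L] (hξ : ∀ i, ξ i ≠ 0)
    {β γ : Type*} [Fintype β] [Fintype γ] {D : β → Derivation K L L}
    (hD : LinearIndependent L fun j a => dlog (D j) (ξ a))
    (hconst : ∀ x : L, (∀ j, D j x = 0) → x ∈ Set.range (algebraMap K L))
    {c : γ → ι → K} (hc : LinearIndependent K c)
    (hcD : ∀ i j, dlogForm K ξ (algebraMap K L ∘ c i) (D j) = 0) :
    ∃ (ρ : ℕ) (m : Fin ρ → ι → ℤ), LinearIndependent ℤ m ∧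
      trdegSet k (Set.range fun j => laurentMonomial ξ (m j)) + Fintype.card β ≤
        trdegSet k (Set.range ξ) ∧
      trdegSet k (Set.range fun j => laurentMonomial ξ (m j)) + Fintype.card β + Fintype.card γ ≤
        trdegSet k (Set.range ξ) + ρ := by
  obtain ⟨m, hm, hmem⟩ := exists_linearIndependent_fin_finrank (algebraicExponents K hξ)
  refine ⟨_, m, hm, ?_⟩
  let w : γ → Derivation K L L →ₗ[L] L := fun i => dlogForm K ξ (algebraMap K L ∘ c i)
  have hupper := finrank_range_dlogForm_add_trdegSet_le (k := k) (K := K) (ξ := ξ) hmem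
  have hlower := card_add_finrank_le_finrank_range_dlogForm hD
    (N := Submodule.span L (Set.range w))
    (Submodule.span_le.2 (Set.range_subset_iff.2 fun i => ⟨_, rfl⟩)) fun v hv j => by
      induction hv using Submodule.span_induction with
      | mem v hv => obtain ⟨i, rfl⟩ := hv; exact hcD i j
      | zero => rfl
      | add v v' _ _ hv hv' => rw [LinearMap.add_apply, hv, hv', add_zero]
      | smul r v _ hv => rw [LinearMap.smul_apply, hv, smul_zero]
  have hspan := finrank_span_le_finrank_span_of_commutator hconst (w := w)
    fun i j => dlogForm_commutator hξ (c i) (hcD i j)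
  have hrel := (card_le_finrank_span_add_finrank_algebraicExponents hξ hc).trans
    (Nat.add_le_add_right hspan _)
  constructor <;> lia

end AlgebraicConstants

variable {k L ι : Type*} [Field k] [Field L] [Algebra k L]

/-- The field of common constants of a family of derivations. -/
def constantField {β : Type*} (D : β → Derivation k L L) : IntermediateField k L where
  carrier := {x | ∀ j, D j x = 0}
  mul_mem' ha hb j := by simp [ha j, hb j]
  add_mem' ha hb j := by simp [ha j, hb j]
  algebraMap_mem' r j := by simp
  inv_mem' a ha j := by simp [Derivation.leibniz_inv, ha j]

variable [Fintype ι]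

/-- Derivations `der j` of `L` whose logarithmic values on `ξ` are linearly independent and satisfy
linearly independent linear relations with coefficients killed by the derivations. For the generic
point `ξ` of a subvariety of a coset, such relations come from the equations of the coset; unlike
those, they make sense in an ultraproduct. -/
structure DlogSystem (k : Type*) {L ι : Type*} [Field k] [Field L] [Algebra k L] [Fintype ι]
    (ξ : ι → L) (β γ : Type*) where
  der : β → Derivation k L L
  coeff : γ → ι → L
  linearIndependent_dlog : LinearIndependent L fun j a => dlog (der j) (ξ a)
  linearIndependent_coeff : LinearIndependent L coeff
  der_coeff : ∀ j i a, der j (coeff i a) = 0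
  sum_coeff_mul_dlog : ∀ j i, ∑ a, coeff i a * dlog (der j) (ξ a) = 0

theorem DlogSystem.exists_trdegSet_laurentMonomial_add_card_le [CharZero L] {ξ : ι → L}
    {β γ : Type*} [Fintype β] [Fintype γ] (S : DlogSystem k ξ β γ) (hξ : ∀ i, ξ i ≠ 0) :
    ∃ (ρ : ℕ) (m : Fin ρ → ι → ℤ), LinearIndependent ℤ m ∧
      trdegSet k (Set.range fun j => laurentMonomial ξ (m j)) + Fintype.card β ≤
        trdegSet k (Set.range ξ) ∧
      trdegSet k (Set.range fun j => laurentMonomial ξ (m j)) + Fintype.card β + Fintype.card γ ≤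
        trdegSet k (Set.range ξ) + ρ := by
  let c : γ → ι → constantField S.der := fun i a => ⟨S.coeff i a, fun j => S.der_coeff j i a⟩
  have hc : LinearIndependent (constantField S.der) c :=
    linearIndependent_algebraMap_comp_iff.1 S.linearIndependent_coeff
  exact exists_trdegSet_laurentMonomial_add_card_le_of_dlogForm hξ (K := constantField S.der)
    (D := fun j => extendScalarsDerivation (S.der j) fun x => x.2 j) S.linearIndependent_dlog
    (fun x hx => ⟨⟨x, hx⟩, rfl⟩) hc
    fun i j => (dlogForm_apply ξ _ _).trans (S.sum_coeff_mul_dlog j i)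

end AxInequality

section Dimension

open MvPolynomial

universe u

theorem eq_zero_of_dvd_rename_succAbove {R : Type*} [CommRing R] [IsDomain R] {d : ℕ}
    {π : MvPolynomial (Fin (d + 1)) R} {i : Fin (d + 1)} (hi : i ∈ π.vars)
    {f : MvPolynomial (Fin d) R} (hf : π ∣ rename i.succAbove f) : f = 0 := by
  by_contra hf0
  obtain ⟨g, hg⟩ := hf
  have hr : rename i.succAbove f ≠ 0 := by
    rwa [Ne, map_eq_zero_iff _ (rename_injective _ Fin.succAbove_right_injective)]
  have hdeg : degreeOf i (rename i.succAbove f) = 0 := by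
    by_contra h
    obtain ⟨j, -, hj⟩ := mem_vars_rename _ _ (mem_vars_iff_degreeOf_ne_zero.2 h)
    exact Fin.succAbove_ne i j hj
  rw [hg, degreeOf_mul_eq (left_ne_zero_of_mul (hg ▸ hr)) (right_ne_zero_of_mul (hg ▸ hr))] at hdeg
  exact mem_vars_iff_degreeOf_ne_zero.1 hi (Nat.eq_zero_of_add_eq_zero_right hdeg)

theorem exists_mem_vars_of_prime {k σ : Type*} [Field k] {π : MvPolynomial σ k} (hπ : Prime π) :
    ∃ i, i ∈ π.vars := by
  by_contra! h
  have hC := vars_eq_empty_iff_eq_C.1 (Finset.eq_empty_of_forall_notMem h)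
  have h0 : coeff 0 π ≠ 0 := fun h0 => hπ.ne_zero (by rw [hC, h0, C_0])
  exact hπ.not_isUnit (hC ▸ (IsUnit.mk0 _ h0).map C)

theorem exists_prime_eq_span_of_height_le_one {R : Type*} [CommRing R] [IsDomain R]
    [UniqueFactorizationMonoid R] {P : Ideal R} [P.IsPrime] (h0 : P ≠ ⊥) (h : P.height ≤ 1) :
    ∃ π, Prime π ∧ P = Ideal.span {π} := by
  have h1 : P.height = 1 :=
    h.antisymm (Order.one_le_iff_ne_zero.2 (Ideal.height_eq_zero_iff_eq_bot.not.2 h0))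
  obtain ⟨π, hπP, hπ⟩ := Ideal.IsPrime.exists_mem_prime_of_ne_bot ‹_› h0
  exact ⟨π, hπ, P.eq_span_singleton_of_height_eq_one h1 hπP hπ⟩

theorem natCast_le_trdeg_quotient_add_one {k : Type u} [Field k] {d : ℕ}
    (P : Ideal (MvPolynomial (Fin d) k)) [P.IsPrime] (h0 : P ≠ ⊥) (h : P.height ≤ 1) :
    (d : Cardinal) ≤ Algebra.trdeg k (MvPolynomial (Fin d) k ⧸ P) + 1 := by
  obtain ⟨π, hπ, rfl⟩ := exists_prime_eq_span_of_height_le_one h0 h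
  obtain ⟨i, hi⟩ := exists_mem_vars_of_prime hπ
  obtain _ | d := d
  · exact i.elim0
  let y : Fin d → MvPolynomial (Fin (d + 1)) k ⧸ Ideal.span {π} :=
    fun j => Ideal.Quotient.mk _ (X (i.succAbove j))
  have hy : AlgebraicIndependent k y := by
    rw [algebraicIndependent_iff]
    intro F hF
    refine eq_zero_of_dvd_rename_succAbove hi ?_
    have hF' : aeval y F = Ideal.Quotient.mkₐ k _ (rename i.succAbove F) := by
      rw [← AlgHom.comp_apply]
      congr 1
      ext
      simp [y]
    rwa [← Ideal.mem_span_singleton, ← Ideal.Quotient.eq_zero_iff_mem, ← Ideal.Quotient.mkₐ_eq_mk k,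
      ← hF']
  have hcard := hy.lift_cardinalMk_le_trdeg
  rw [Cardinal.mk_fin, Cardinal.lift_natCast, Cardinal.lift_uzero] at hcard
  rw [Nat.cast_succ]
  gcongr

/-- Noether normalization and going down reduce to a polynomial ring, where the prime is
principal. -/
theorem trdeg_le_trdeg_quotient_add_one {k A : Type u} [Field k] [CommRing A] [IsDomain A]
    [Algebra k A] [Algebra.FiniteType k A] {f : A} (hf : f ≠ 0) {Q : Ideal A}
    (hQ : Q ∈ (Ideal.span {f}).minimalPrimes) :
    Algebra.trdeg k A ≤ Algebra.trdeg k (A ⧸ Q) + 1 := by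
  have := Algebra.FiniteType.isNoetherianRing k A
  have := hQ.1.1
  obtain ⟨d, g, hg, hgi⟩ := exists_integral_inj_algHom_of_fg k A
  let := g.toRingHom.toAlgebra
  let S := MvPolynomial (Fin d) k
  have : IsScalarTower k S A := IsScalarTower.of_algebraMap_eq fun x => (g.commutes x).symm
  have : Algebra.IsIntegral S A := ⟨hgi⟩
  have : FaithfulSMul S A := (faithfulSMul_iff_algebraMap_injective _ _).2 hg
  have hd : Algebra.trdeg k A = d := by
    rw [← trdeg_add_eq k S (A := A), trdeg_eq_zero (R := S),
      MvPolynomial.trdeg_of_isDomain]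
    simp
  have hheight : (Q.under S).height ≤ 1 := by
    have hQ1 := Ideal.height_le_one_of_isPrincipal_of_mem_minimalPrimes _ Q hQ
    rw [Ideal.height_eq_height_add_of_liesOver_of_hasGoingDown (Q.under S) Q] at hQ1
    exact le_self_add.trans hQ1
  have hne : Q.under S ≠ ⊥ := fun h => hf <| by
    have hfQ := hQ.1.2 (Ideal.mem_span_singleton_self f)
    rwa [Ideal.eq_bot_of_comap_eq_bot (R := S) h] at hfQ
  calc Algebra.trdeg k A
    _ ≤ Algebra.trdeg k (S ⧸ Q.under S) + 1 :=
      hd.trans_le (natCast_le_trdeg_quotient_add_one _ hne hheight)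
    _ ≤ Algebra.trdeg k (A ⧸ Q) + 1 := by
      gcongr
      exact trdeg_le_of_injective (IsScalarTower.toAlgHom k (S ⧸ Q.under S) (A ⧸ Q))
        Ideal.algebraMap_quotient_injective

theorem trdeg_lt_of_surjective_of_not_injective {k A B : Type u} [Field k] [CommRing A]
    [IsDomain A] [CommRing B] [IsDomain B] [Algebra k A] [Algebra k B] [Algebra.FiniteType k A]
    {φ : A →ₐ[k] B} (hφ : Function.Surjective φ) (hφ' : ¬ Function.Injective φ) :
    Algebra.trdeg k B < Algebra.trdeg k A := by
  by_contra! hle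
  have : Algebra.FiniteType k B := .of_surjective φ hφ
  obtain ⟨s, hs⟩ := exists_isTranscendenceBasis k B
  have : Finite s := by
    rw [← Cardinal.lt_aleph0_iff_finite, hs.cardinalMk_eq_trdeg]
    exact trdeg_lt_aleph0_of_finiteType
  choose x hx using fun b : s => hφ b
  have hφx : φ ∘ x = Subtype.val := funext hx
  have hxind : AlgebraicIndependent k x := .of_comp φ (hφx ▸ hs.1)
  have hxbasis := hxind.isTranscendenceBasis_of_trdeg_le_of_finite
    (hle.trans_eq hs.cardinalMk_eq_trdeg.symm)
  obtain ⟨f, hf0, hf⟩ : ∃ f, f ≠ 0 ∧ φ f = 0 := by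
    by_contra! h
    exact hφ' ((injective_iff_map_eq_zero φ).2 fun f hf => not_imp_not.1 (h f) hf)
  obtain ⟨⟨r, hr⟩, hr0, hfr⟩ :=
    (hxbasis.isAlgebraic.isAlgebraic f).exists_nonzero_dvd (mem_nonZeroDivisors_of_ne_zero hf0)
  obtain ⟨p, rfl⟩ := (Algebra.adjoin_range_eq_range_aeval k x ▸ hr : r ∈ (aeval x).range)
  have hp : aeval (Subtype.val : s → B) p = 0 := by
    rw [← hφx, Function.comp_def, ← comp_aeval_apply]
    exact zero_dvd_iff.1 (hf ▸ map_dvd φ hfr)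
  exact hr0 (Subtype.ext (by simp [hs.1.eq_zero_of_aeval_eq_zero p hp]))

end Dimension

section QuotientTrdeg

open MvPolynomial

universe u

theorem toNat_trdeg_adjoin {k L : Type*} [Field k] [Field L] [Algebra k L] {s : Set L}
    (hs : s.Finite) : (Algebra.trdeg k (Algebra.adjoin k s)).toNat = trdegSet k s := by
  have hval : Function.Injective (Algebra.adjoin k s).val := Subtype.val_injective
  let t : Set (Algebra.adjoin k s) := (↑) ⁻¹' s
  have ht : Algebra.adjoin k t = ⊤ := Algebra.adjoin_adjoin_coe_preimage
  have : Algebra.IsAlgebraic (Algebra.adjoin k t) (Algebra.adjoin k s) :=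
    ⟨fun a => isAlgebraic_algebraMap (⟨a, ht ▸ Algebra.mem_top⟩ : Algebra.adjoin k t)⟩
  obtain ⟨u, hut, hu⟩ := exists_isTranscendenceBasis_subset (R := k) t
  have hus : (↑) '' u ⊆ s := (Set.image_mono hut).trans (Set.image_preimage_subset _ _)
  have hufin : u.Finite := (hs.subset hus).of_finite_image Subtype.val_injective.injOn
  have hucard : (Algebra.trdeg k (Algebra.adjoin k s)).toNat = u.ncard := by
    rw [← hu.cardinalMk_eq_trdeg, ← Nat.card_coe_set_eq, Nat.card]
  refine le_antisymm ?_ ?_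
  · rw [hucard, ← Set.ncard_image_of_injective u Subtype.val_injective]
    exact ncard_le_trdegSet hs ((algebraicIndependent_image hval.injOn).1 (hu.1.map' hval)) hus
  · obtain ⟨I, hIs, hI, -, hcard⟩ := exists_algebraicIndepOn_ncard_eq_trdegSet (k := k) hs
    have := (hs.subset hIs).to_subtype
    let x : I → Algebra.adjoin k s := fun i => ⟨i, Algebra.subset_adjoin (hIs i.2)⟩
    have hx : AlgebraicIndependent k x := .of_comp (Algebra.adjoin k s).val hI
    have hle := hx.lift_cardinalMk_le_trdeg
    rw [Cardinal.lift_id, Cardinal.lift_id, ← hu.cardinalMk_eq_trdeg] at hle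
    rw [hucard, ← hcard, ← Nat.card_coe_set_eq, ← Nat.card_coe_set_eq]
    exact Cardinal.toNat_le_toNat hle (Cardinal.lt_aleph0_iff_set_finite.2 hufin)

/-- The transcendence degree of `A ⧸ q` over `k`, which for prime `q` is the dimension of the
subvariety of `Spec A` defined by `q`. -/
def quotientTrdeg (k : Type*) {A : Type*} [CommRing k] [CommRing A] [Algebra k A] (q : Ideal A) :
    ℕ :=
  (Algebra.trdeg k (A ⧸ q)).toNat

variable {k A : Type u} [Field k] [CommRing A] [Algebra k A] [Algebra.FiniteType k A]
  {q q' : Ideal A}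

theorem natCast_quotientTrdeg (q : Ideal A) :
    (quotientTrdeg k q : Cardinal) = Algebra.trdeg k (A ⧸ q) :=
  Cardinal.cast_toNat_of_lt_aleph0 trdeg_lt_aleph0_of_finiteType

variable (k) in
theorem quotientTrdeg_anti (h : q ≤ q') : quotientTrdeg k q' ≤ quotientTrdeg k q := by
  rw [← Nat.cast_le (α := Cardinal.{u}), natCast_quotientTrdeg, natCast_quotientTrdeg]
  exact trdeg_le_of_surjective (Ideal.Quotient.factorₐ k h) (Ideal.Quotient.factor_surjective h)

variable (k) in
theorem quotientTrdeg_strictAnti [q.IsPrime] [q'.IsPrime] (h : q < q') :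
    quotientTrdeg k q' < quotientTrdeg k q := by
  rw [← Nat.cast_lt (α := Cardinal.{u}), natCast_quotientTrdeg, natCast_quotientTrdeg]
  refine trdeg_lt_of_surjective_of_not_injective (φ := Ideal.Quotient.factorₐ k h.le)
    (Ideal.Quotient.factor_surjective h.le) fun hinj => ?_
  obtain ⟨f, hf', hf⟩ := SetLike.exists_of_lt h
  refine hf (Ideal.Quotient.eq_zero_iff_mem.1 (hinj ?_))
  simpa [Ideal.Quotient.eq_zero_iff_mem] using hf'

variable (k) in
theorem exists_isPrime_le_quotientTrdeg_add_one [q.IsPrime] {M : Ideal A} [M.IsPrime] (hqM : q ≤ M)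
    {f : A} (hf : f ∉ q) (hfM : f ∈ M) :
    ∃ q' : Ideal A, q'.IsPrime ∧ q ≤ q' ∧ q' ≤ M ∧ f ∈ q' ∧
      quotientTrdeg k q ≤ quotientTrdeg k q' + 1 := by
  let π := Ideal.Quotient.mk q
  have hπ : Function.Surjective π := Ideal.Quotient.mk_surjective
  have hker : RingHom.ker π = q := Ideal.mk_ker
  have : (M.map π).IsPrime := Ideal.map_isPrime_of_surjective hπ (by rwa [hker])
  obtain ⟨Q, hQ, hQM⟩ := Ideal.exists_minimalPrimes_le
    ((Ideal.span_singleton_le_iff_mem _).2 (Ideal.mem_map_of_mem π hfM))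
  have := hQ.1.1
  have hqQ : q ≤ Q.comap π := hker.symm.trans_le (Ideal.ker_le_comap π)
  refine ⟨Q.comap π, inferInstance, hqQ, ?_, hQ.1.2 (Ideal.mem_span_singleton_self _), ?_⟩
  · refine (Ideal.comap_mono hQM).trans ?_
    rw [Ideal.comap_map_of_surjective' π hπ, hker, sup_eq_left.2 hqM]
  · rw [← Nat.cast_le (α := Cardinal.{u}), Nat.cast_succ, natCast_quotientTrdeg,
      natCast_quotientTrdeg]
    refine (trdeg_le_trdeg_quotient_add_one
      (fun h => hf (Ideal.Quotient.eq_zero_iff_mem.1 h)) hQ).trans ?_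
    gcongr
    exact trdeg_le_of_surjective (Ideal.quotientMapₐ Q (Ideal.Quotient.mkₐ k q) le_rfl)
      (Ideal.quotientMap_surjective (H := le_rfl) hπ)

theorem quotientTrdeg_ker_aeval {σ k L : Type*} [Finite σ] [Field k] [Field L] [Algebra k L]
    (ξ : σ → L) :
    quotientTrdeg k (RingHom.ker (aeval (R := k) ξ)) = trdegSet k (Set.range ξ) := by
  rw [← toNat_trdeg_adjoin (Set.finite_range ξ), Algebra.adjoin_range_eq_range_aeval]
  have := congrArg Cardinal.toNat (Ideal.quotientKerEquivRange (aeval (R := k) ξ)).lift_trdeg_eq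
  simpa only [Cardinal.toNat_lift, quotientTrdeg] using this

theorem quotientTrdeg_bot {σ k : Type*} [Fintype σ] [Field k] :
    quotientTrdeg k (⊥ : Ideal (MvPolynomial σ k)) = Fintype.card σ := by
  rw [quotientTrdeg, (AlgEquiv.quotientBot k (MvPolynomial σ k)).trdeg_eq]
  simp [MvPolynomial.trdeg_of_isDomain]

theorem trdegSet_range_le_of_ker_aeval_le {σ : Type} [Finite σ] {k : Type u} {L L' : Type*}
    [Field k] [Field L] [Field L'] [Algebra k L] [Algebra k L'] {ξ : σ → L} {ζ : σ → L'}
    (h : RingHom.ker (aeval (R := k) ξ) ≤ RingHom.ker (aeval (R := k) ζ)) :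
    trdegSet k (Set.range ζ) ≤ trdegSet k (Set.range ξ) := by
  rw [← quotientTrdeg_ker_aeval, ← quotientTrdeg_ker_aeval]
  exact quotientTrdeg_anti k h

theorem trdegSet_range_lt_of_ker_aeval_lt {σ : Type} [Finite σ] {k : Type u} {L L' : Type*}
    [Field k] [Field L] [Field L'] [Algebra k L] [Algebra k L'] {ξ : σ → L} {ζ : σ → L'}
    (h : RingHom.ker (aeval (R := k) ξ) < RingHom.ker (aeval (R := k) ζ)) :
    trdegSet k (Set.range ζ) < trdegSet k (Set.range ξ) := by
  have : (RingHom.ker (aeval (R := k) ξ)).IsPrime := RingHom.ker_isPrime _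
  have : (RingHom.ker (aeval (R := k) ζ)).IsPrime := RingHom.ker_isPrime _
  rw [← quotientTrdeg_ker_aeval, ← quotientTrdeg_ker_aeval]
  exact quotientTrdeg_strictAnti k h

/-- The generic point of the subvariety of affine space defined by the prime ideal `q`, with
coordinates in the function field of that subvariety. -/
def primeGenericPoint {σ k : Type*} [Field k] (q : Ideal (MvPolynomial σ k)) [q.IsPrime] (i : σ) :
    FractionRing (MvPolynomial σ k ⧸ q) :=
  algebraMap _ _ (Ideal.Quotient.mk q (X i))

section GenericPoint

variable {σ k : Type*} [Field k] (q : Ideal (MvPolynomial σ k)) [q.IsPrime]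

theorem ker_aeval_primeGenericPoint : RingHom.ker (aeval (R := k) (primeGenericPoint q)) = q := by
  have h : aeval (primeGenericPoint q) = (IsScalarTower.toAlgHom k (MvPolynomial σ k ⧸ q)
      (FractionRing (MvPolynomial σ k ⧸ q))).comp (Ideal.Quotient.mkₐ k q) := by
    ext i
    simp [primeGenericPoint]
  refine SetLike.ext fun f => ?_
  rw [RingHom.mem_ker, h, AlgHom.comp_apply, IsScalarTower.toAlgHom_apply,
    FaithfulSMul.algebraMap_eq_zero_iff, Ideal.Quotient.mkₐ_eq_mk, Ideal.Quotient.eq_zero_iff_mem]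

variable {q} in
theorem aeval_primeGenericPoint_eq_zero_iff {f : MvPolynomial σ k} :
    aeval (primeGenericPoint q) f = 0 ↔ f ∈ q := by
  rw [← RingHom.mem_ker, ker_aeval_primeGenericPoint]

variable {q} in
theorem primeGenericPoint_ne_zero (hX : ∀ i, X i ∉ q) (i : σ) : primeGenericPoint q i ≠ 0 :=
  fun h => hX i (aeval_primeGenericPoint_eq_zero_iff.1 (by rwa [aeval_X]))

theorem trdegSet_range_primeGenericPoint [Finite σ] :
    trdegSet k (Set.range (primeGenericPoint q)) = quotientTrdeg k q := by
  rw [← quotientTrdeg_ker_aeval, ker_aeval_primeGenericPoint]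

instance charZero_fractionRing_quotient [CharZero k] :
    CharZero (FractionRing (MvPolynomial σ k ⧸ q)) :=
  charZero_of_injective_algebraMap (algebraMap k _).injective

end GenericPoint

end QuotientTrdeg

section TorusGeometry

open MvPolynomial

/-- The coordinate ring of affine space, whose elements cut out the closed subsets of the torus. -/
abbrev CoordRing (n : ℕ) : Type := MvPolynomial (Fin n) Qbar

variable {n : ℕ} {S T : Set (TorusPt n)} {I J q : Ideal (CoordRing n)} {x : TorusPt n}

/-- The ideal of polynomials vanishing at a point of the torus. -/
def pointIdeal (x : TorusPt n) : Ideal (CoordRing n) :=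
  RingHom.ker (eval fun i => (x i : Qbar))

theorem mem_pointIdeal {f : CoordRing n} :
    f ∈ pointIdeal x ↔ eval (fun i => (x i : Qbar)) f = 0 :=
  Iff.rfl

instance isPrime_pointIdeal (x : TorusPt n) : (pointIdeal x).IsPrime :=
  RingHom.ker_isPrime _

theorem X_notMem_of_le_pointIdeal (h : q ≤ pointIdeal x) (i : Fin n) : X i ∉ q := fun hi => by
  simpa [mem_pointIdeal] using h hi

/-- The ideal of polynomials vanishing on a subset of the torus. -/
def torusIdeal (S : Set (TorusPt n)) : Ideal (CoordRing n) :=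
  ⨅ x ∈ S, pointIdeal x

/-- The closed subset of the torus defined by an ideal. -/
def torusLocus (I : Ideal (CoordRing n)) : Set (TorusPt n) :=
  {x | I ≤ pointIdeal x}

theorem mem_torusIdeal {f : CoordRing n} :
    f ∈ torusIdeal S ↔ ∀ x ∈ S, eval (fun i => (x i : Qbar)) f = 0 := by
  simp [torusIdeal, mem_pointIdeal]

theorem mem_torusLocus : x ∈ torusLocus I ↔ I ≤ pointIdeal x :=
  Iff.rfl

theorem zClosed_torusLocus (I : Ideal (CoordRing n)) : ZClosed (torusLocus I) :=
  ⟨I, rfl⟩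

theorem le_torusIdeal_iff : I ≤ torusIdeal S ↔ S ⊆ torusLocus I := by
  simp only [torusIdeal, le_iInf_iff, Set.subset_def, mem_torusLocus]

theorem torusIdeal_anti (h : S ⊆ T) : torusIdeal T ≤ torusIdeal S :=
  le_torusIdeal_iff.2 (h.trans (le_torusIdeal_iff.1 le_rfl))

theorem torusLocus_anti (h : I ≤ J) : torusLocus J ⊆ torusLocus I :=
  fun _ hx => h.trans hx

theorem torusLocus_torusIdeal (hS : ZClosed S) : torusLocus (torusIdeal S) = S := by
  refine Set.Subset.antisymm ?_ (le_torusIdeal_iff.1 le_rfl)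
  obtain ⟨I, rfl⟩ := hS
  exact fun x hx f hf => hx (mem_torusIdeal.2 fun y hy => hy f hf)

theorem isPrime_torusIdeal (hS : ZIrred S) : (torusIdeal S).IsPrime := by
  obtain ⟨⟨x, hx⟩, hirr⟩ := hS
  refine Ideal.isPrime_iff.2 ⟨(Ideal.ne_top_iff_one _).2 fun h => ?_, fun {f g} hfg => ?_⟩
  · simpa using mem_torusIdeal.1 h x hx
  · have hcover : S ⊆ torusLocus (Ideal.span {f}) ∪ torusLocus (Ideal.span {g}) := fun y hy => by
      have := mem_torusIdeal.1 hfg y hy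
      simpa [mem_torusLocus, Ideal.span_singleton_le_iff_mem, mem_pointIdeal] using this
    refine (hirr _ _ (zClosed_torusLocus _) (zClosed_torusLocus _) hcover).imp ?_ ?_ <;>
    · rw [← le_torusIdeal_iff, Ideal.span_singleton_le_iff_mem]
      exact id

theorem X_notMem_torusIdeal (hS : S.Nonempty) (i : Fin n) : X i ∉ torusIdeal S :=
  X_notMem_of_le_pointIdeal (le_torusIdeal_iff.1 le_rfl hS.some_mem) i

/-- The factor `∏ X i` vanishes on the zeros of `q` outside the torus, so that the Nullstellensatz
for affine space applies. -/
theorem torusIdeal_torusLocus [hq : q.IsPrime] (hX : ∀ i, X i ∉ q) :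
    torusIdeal (torusLocus q) = q := by
  refine le_antisymm (fun f hf => ?_) (le_torusIdeal_iff.2 subset_rfl)
  have hmem : f * ∏ i, X i ∈ MvPolynomial.vanishingIdeal Qbar (zeroLocus Qbar q) := by
    rw [mem_vanishingIdeal_iff]
    intro y hy
    rw [mem_zeroLocus_iff] at hy
    simp only [aeval_eq_eval] at hy ⊢
    by_cases h0 : ∀ i, y i ≠ 0
    · have hfy : eval y f = 0 := mem_torusIdeal.1 hf (fun i => Units.mk0 (y i) (h0 i)) hy
      rw [map_mul, hfy, zero_mul]
    · push Not at h0
      obtain ⟨i, hi⟩ := h0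
      rw [map_mul, map_prod, Finset.prod_eq_zero (Finset.mem_univ i) (by simpa using hi), mul_zero]
  rw [IsPrime.vanishingIdeal_zeroLocus] at hmem
  refine (hq.mem_or_mem hmem).resolve_right fun h => ?_
  obtain ⟨i, -, hi⟩ := hq.prod_mem_iff.1 h
  exact hX i hi

theorem torusLocus_nonempty [hq : q.IsPrime] (hX : ∀ i, X i ∉ q) : (torusLocus q).Nonempty := by
  by_contra h
  refine hq.ne_top ?_
  rw [← torusIdeal_torusLocus hX, Set.not_nonempty_iff_eq_empty.1 h]
  simp [torusIdeal]

theorem zIrred_torusLocus [hq : q.IsPrime] (hX : ∀ i, X i ∉ q) : ZIrred (torusLocus q) := by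
  refine ⟨torusLocus_nonempty hX, fun Z₁ Z₂ h₁ h₂ h => ?_⟩
  have hmul : torusIdeal Z₁ * torusIdeal Z₂ ≤ q := by
    rw [← torusIdeal_torusLocus hX, Ideal.mul_le]
    intro f hf g hg
    rw [mem_torusIdeal]
    intro x hx
    rw [map_mul, mul_eq_zero]
    exact (h hx).imp (mem_torusIdeal.1 hf x) (mem_torusIdeal.1 hg x)
  refine (hq.mul_le.1 hmul).imp (fun h => ?_) fun h => ?_
  · exact (torusLocus_anti h).trans (torusLocus_torusIdeal h₁).subset
  · exact (torusLocus_anti h).trans (torusLocus_torusIdeal h₂).subset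

theorem torusIdeal_strictAnti (hS : ZClosed S) (hT : ZClosed T) (h : S ⊂ T) :
    torusIdeal T < torusIdeal S := by
  refine (torusIdeal_anti h.1).lt_of_ne fun he => h.ne ?_
  rw [← torusLocus_torusIdeal hS, ← he, torusLocus_torusIdeal hT]

theorem torusLocus_strictAnti [q.IsPrime] [J.IsPrime] (hq : ∀ i, X i ∉ q) (hJ : ∀ i, X i ∉ J)
    (h : q < J) : torusLocus J ⊂ torusLocus q := by
  refine (torusLocus_anti h.le).ssubset_of_ne fun he => h.ne ?_
  rw [← torusIdeal_torusLocus hq, ← he, torusIdeal_torusLocus hJ]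

theorem quotientTrdeg_pointIdeal (x : TorusPt n) : quotientTrdeg Qbar (pointIdeal x) = 0 := by
  have hker : RingHom.ker (aeval (R := Qbar) fun i => (x i : Qbar)) = pointIdeal x := by
    ext f
    simp [mem_pointIdeal]
  rw [← hker, quotientTrdeg_ker_aeval]
  refine Nat.le_zero.1 ((trdegSet_le_of_isAlgebraic (t := ∅) (Set.finite_range _) Set.finite_empty
    fun a _ => ?_).trans ((trdegSet_le_ncard Set.finite_empty).trans_eq (Set.ncard_empty _)))
  exact isAlgebraic_of_mem_adjoin (algebraMap_mem _ a)

/-- The chains of closed irreducible subsets whose lengths define `zdim S`. -/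
def IsClosedChain (S : Set (TorusPt n)) {d : ℕ} (Z : Fin (d + 1) → Set (TorusPt n)) : Prop :=
  (∀ i, ZClosed (Z i) ∧ ZIrred (Z i) ∧ Z i ⊆ S) ∧ ∀ i j, i < j → Z i ⊂ Z j

theorem IsClosedChain.le_quotientTrdeg {d : ℕ} {Z : Fin (d + 1) → Set (TorusPt n)}
    (hZ : IsClosedChain S Z) : d ≤ quotientTrdeg Qbar (torusIdeal S) := by
  have hmono : StrictMono fun i => quotientTrdeg Qbar (torusIdeal (Z i)) := fun i j hij => by
    have := isPrime_torusIdeal (hZ.1 i).2.1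
    have := isPrime_torusIdeal (hZ.1 j).2.1
    exact quotientTrdeg_strictAnti Qbar
      (torusIdeal_strictAnti (hZ.1 i).1 (hZ.1 j).1 (hZ.2 i j hij))
  have hcard := Finset.card_le_card_of_injOn (s := Finset.univ)
    (t := Finset.range (quotientTrdeg Qbar (torusIdeal S) + 1)) _ (fun i _ => ?_)
    hmono.injective.injOn
  · simpa using hcard
  · simpa [Nat.lt_succ_iff] using quotientTrdeg_anti Qbar (torusIdeal_anti (hZ.1 i).2.2)

theorem bddAbove_isClosedChain (S : Set (TorusPt n)) :
    BddAbove {d : ℕ | ∃ Z : Fin (d + 1) → Set (TorusPt n), IsClosedChain S Z} :=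
  ⟨_, fun _ ⟨_, hZ⟩ => hZ.le_quotientTrdeg⟩

theorem zdim_le {d : ℕ}
    (h : ∀ Z ⊆ S, ZClosed Z → ZIrred Z → quotientTrdeg Qbar (torusIdeal Z) ≤ d) : zdim S ≤ d := by
  refine csSup_le' fun e ⟨Z, hZ, hlt⟩ => ?_
  obtain ⟨hc, hi, hS⟩ := hZ (Fin.last e)
  refine (IsClosedChain.le_quotientTrdeg (Z := Z) ⟨fun i => ⟨(hZ i).1, (hZ i).2.1, ?_⟩, hlt⟩).trans
    (h _ hS hc hi)
  exact (Fin.le_last i).eq_or_lt.elim (fun h => h ▸ subset_rfl) fun h => (hlt _ _ h).subset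

theorem zdim_le_quotientTrdeg (S : Set (TorusPt n)) : zdim S ≤ quotientTrdeg Qbar (torusIdeal S) :=
  zdim_le fun _ hZ _ _ => quotientTrdeg_anti Qbar (torusIdeal_anti hZ)

theorem zdim_mono (h : S ⊆ T) : zdim S ≤ zdim T :=
  csSup_le' fun _ ⟨Z, hZ, hlt⟩ => le_csSup (bddAbove_isClosedChain T)
    ⟨Z, fun i => ⟨(hZ i).1, (hZ i).2.1, (hZ i).2.2.trans h⟩, hlt⟩

theorem IsClosedChain.snoc {d : ℕ} {Z : Fin (d + 1) → Set (TorusPt n)} (hZ : IsClosedChain S Z)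
    (hc : ZClosed T) (hi : ZIrred T) (h : S ⊂ T) :
    IsClosedChain T (Fin.snoc (α := fun _ => Set (TorusPt n)) Z T) := by
  refine ⟨fun i => ?_, fun i j => ?_⟩
  · cases i using Fin.lastCases with
    | last => simpa only [Fin.snoc_last] using ⟨hc, hi, subset_rfl⟩
    | cast i =>
      simpa only [Fin.snoc_castSucc] using
        ⟨(hZ.1 i).1, (hZ.1 i).2.1, (hZ.1 i).2.2.trans h.subset⟩
  · cases j using Fin.lastCases with
    | last =>
      cases i using Fin.lastCases with
      | last => exact fun h => absurd h (lt_irrefl _)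
      | cast i =>
        simpa only [Fin.snoc_last, Fin.snoc_castSucc] using fun _ =>
          (hZ.1 i).2.2.trans_ssubset h
    | cast j =>
      cases i using Fin.lastCases with
      | last => exact fun h => absurd h (Fin.le_last _).not_gt
      | cast i => simpa only [Fin.snoc_castSucc, Fin.castSucc_lt_castSucc_iff] using hZ.2 i j

theorem exists_isClosedChain {d : ℕ} [q.IsPrime] (hq : q ≤ pointIdeal x)
    (hd : quotientTrdeg Qbar q = d) :
    ∃ Z : Fin (d + 1) → Set (TorusPt n), IsClosedChain (torusLocus q) Z := by
  have hqX := X_notMem_of_le_pointIdeal hq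
  induction d generalizing q with
  | zero =>
    exact ⟨fun _ => torusLocus q,
      fun _ => ⟨zClosed_torusLocus q, zIrred_torusLocus hqX, subset_rfl⟩, fun i j hij => by lia⟩
  | succ d ih =>
    have hlt : q < pointIdeal x := hq.lt_of_ne fun h => by
      rw [h, quotientTrdeg_pointIdeal] at hd
      lia
    obtain ⟨f, hfx, hfq⟩ := SetLike.exists_of_lt hlt
    obtain ⟨q', _, hqq', hq'x, hfq', hle⟩ :=
      exists_isPrime_le_quotientTrdeg_add_one Qbar hq hfq hfx
    have hlt' : q < q' := hqq'.lt_of_ne fun h => hfq (h ▸ hfq')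
    have hd' := quotientTrdeg_strictAnti Qbar hlt'
    have hq'X := X_notMem_of_le_pointIdeal hq'x
    obtain ⟨Z, hZ⟩ := ih hq'x (by lia) hq'X
    exact ⟨_, hZ.snoc (zClosed_torusLocus q) (zIrred_torusLocus hqX)
      (torusLocus_strictAnti hqX hq'X hlt')⟩

theorem zdim_torusLocus [q.IsPrime] (hX : ∀ i, X i ∉ q) :
    zdim (torusLocus q) = quotientTrdeg Qbar q := by
  refine le_antisymm ?_ ?_
  · conv_rhs => rw [← torusIdeal_torusLocus hX]
    exact zdim_le_quotientTrdeg _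
  · obtain ⟨x, hx⟩ := torusLocus_nonempty hX
    exact le_csSup (bddAbove_isClosedChain _) (exists_isClosedChain hx rfl)

theorem zdim_eq_quotientTrdeg (hc : ZClosed S) (hi : ZIrred S) :
    zdim S = quotientTrdeg Qbar (torusIdeal S) := by
  have := isPrime_torusIdeal hi
  conv_lhs => rw [← torusLocus_torusIdeal hc]
  exact zdim_torusLocus (X_notMem_torusIdeal hi.1)

end TorusGeometry

section MultiplicativeRelations

variable {k L ι : Type*} [Field k] [Field L] [Algebra k L] [CharZero L]

theorem exists_linearIndependent_dlog [Finite ι] (ξ : ι → L) :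
    ∃ D : Fin (trdegSet k (Set.range ξ)) → Derivation k L L,
      LinearIndependent L fun j a => dlog (D j) (ξ a) := by
  classical
  obtain ⟨I, hIξ, hI, -, hcard⟩ := exists_algebraicIndepOn_ncard_eq_trdegSet (k := k)
    (Set.finite_range ξ)
  have hIfin : I.Finite := (Set.finite_range ξ).subset hIξ
  obtain ⟨B, hIB, hB⟩ := exists_isTranscendenceBasis_superset hI
  have hcoe : Finite I := hIfin
  let e : Fin (trdegSet k (Set.range ξ)) ≃ I := (Finite.equivFinOfCardEq hcard).symm
  choose a ha using fun j => hIξ (e j).2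
  choose D hD using fun j => exists_derivation_apply_basis_eq hB
    fun b : B => if (b : L) = e j then (1 : L) else 0
  have hdlog (j l) : dlog (D j) (ξ (a l)) = if l = j then (ξ (a l))⁻¹ else 0 := by
    have h := hD j ⟨e l, hIB (e l).2⟩
    simp only [Subtype.coe_inj, e.apply_eq_iff_eq] at h
    rw [dlog, ha, h, ite_div, one_div, zero_div]
  have hξ (l) : ξ (a l) ≠ 0 := by
    rw [ha]
    exact hI.ne_zero (e l)
  refine ⟨D, Fintype.linearIndependent_iff.2 fun g hg l => ?_⟩
  have h := congrFun hg (a l)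
  simp only [Finset.sum_apply, Pi.smul_apply, hdlog, smul_eq_mul, mul_ite, mul_zero,
    Finset.sum_ite_eq, Finset.mem_univ, if_true, Pi.zero_apply] at h
  exact (mul_eq_zero.1 h).resolve_right (inv_ne_zero (hξ l))

theorem linearIndependent_intCast [Finite ι] {κ : Type*} {m : κ → ι → ℤ}
    (hm : LinearIndependent ℤ m) : LinearIndependent L fun j a => (m j a : L) :=
  (linearIndependent_algebraMap_comp_iff (R := ℤ) (S := L)).2 hm

theorem trdegSet_range_add_card_le [Fintype ι] {κ : Type*} [Fintype κ] {ξ : ι → L}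
    (hξ : ∀ i, ξ i ≠ 0) {m : κ → ι → ℤ} (hm : LinearIndependent ℤ m)
    (h : ∀ j, laurentMonomial ξ (m j) ∈ Set.range (algebraMap k L)) :
    trdegSet k (Set.range ξ) + Fintype.card κ ≤ Fintype.card ι := by
  obtain ⟨D, hD⟩ := exists_linearIndependent_dlog (k := k) ξ
  let M : Matrix (Fin (trdegSet k (Set.range ξ))) ι L := Matrix.of fun j a => dlog (D j) (ξ a)
  let N : Matrix κ ι L := Matrix.of fun j a => (m j a : L)
  have hMN : M * N.transpose = 0 := by
    ext i j
    obtain ⟨c, hc⟩ := h j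
    have hzero : dlog (D i) (laurentMonomial ξ (m j)) = 0 :=
      dlog_eq_zero _ (by rw [← hc, Derivation.map_algebraMap])
    rw [dlog_laurentMonomial _ hξ] at hzero
    simpa only [M, N, Matrix.mul_apply, Matrix.transpose_apply, Matrix.of_apply, mul_comm,
      Matrix.zero_apply] using hzero
  have hrank := Matrix.rank_add_rank_le_card_of_mul_eq_zero hMN
  rwa [Matrix.rank_transpose, LinearIndependent.rank_matrix (M := M) hD,
    LinearIndependent.rank_matrix (M := N) (linearIndependent_intCast hm), Fintype.card_fin]
    at hrank

end MultiplicativeRelations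

section MonomialRelations

open MvPolynomial

universe u

theorem laurentMonomial_eq_div {ι L : Type*} [Fintype ι] [Field L] {ξ : ι → L}
    (hξ : ∀ i, ξ i ≠ 0) (m : ι → ℤ) :
    laurentMonomial ξ m = (∏ i, ξ i ^ (m i).toNat) / ∏ i, ξ i ^ (-m i).toNat := by
  rw [laurentMonomial, ← Finset.prod_div_distrib]
  refine Finset.prod_congr rfl fun i _ => ?_
  rw [← zpow_natCast, ← zpow_natCast, ← zpow_sub₀ (hξ i), Int.toNat_sub_toNat_neg]

variable {σ k : Type*} [Fintype σ] [Field k]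

/-- The polynomial form of the relation `X ^ m = c`: the negative exponents of `m` are moved to the
other side. -/
def binomialRelation (c : k) (m : σ → ℤ) : MvPolynomial σ k :=
  ∏ i, X i ^ (m i).toNat - C c * ∏ i, X i ^ (-m i).toNat

theorem aeval_binomialRelation_eq_zero_iff {L : Type*} [Field L] [Algebra k L] {ξ : σ → L}
    (hξ : ∀ i, ξ i ≠ 0) {c : k} {m : σ → ℤ} :
    aeval ξ (binomialRelation c m) = 0 ↔ laurentMonomial ξ m = algebraMap k L c := by
  rw [laurentMonomial_eq_div hξ,
    div_eq_iff (Finset.prod_ne_zero_iff.2 fun i _ => pow_ne_zero _ (hξ i))]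
  simp [binomialRelation, sub_eq_zero]

theorem binomialRelation_mem_iff {q : Ideal (MvPolynomial σ k)} [q.IsPrime]
    (hX : ∀ i, X i ∉ q) {c : k} {m : σ → ℤ} : binomialRelation c m ∈ q ↔
      laurentMonomial (primeGenericPoint q) m = algebraMap k _ c := by
  rw [← aeval_primeGenericPoint_eq_zero_iff,
    aeval_binomialRelation_eq_zero_iff (primeGenericPoint_ne_zero hX)]

theorem exists_aeval_eq_prod_pow_mul_aeval_laurentMonomial {κ : Type*} (m : κ → σ → ℤ)
    (f : MvPolynomial κ k) : ∃ (N : ℕ) (G : MvPolynomial σ k),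
      ∀ {L : Type*} [Field L] [Algebra k L] (ξ : σ → L), (∀ i, ξ i ≠ 0) →
        aeval ξ G = (∏ i, ξ i) ^ N * aeval (fun j => laurentMonomial ξ (m j)) f := by
  induction f using MvPolynomial.induction_on with
  | C a => exact ⟨0, C a, fun ξ _ => by simp⟩
  | add f g hf hg =>
    obtain ⟨N, G, hG⟩ := hf
    obtain ⟨N', G', hG'⟩ := hg
    refine ⟨N + N', (∏ i, X i) ^ N' * G + (∏ i, X i) ^ N * G', fun ξ hξ => ?_⟩
    simp only [map_add, map_mul, map_pow, map_prod, aeval_X, hG ξ hξ, hG' ξ hξ]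
    ring
  | mul_X f j hf =>
    obtain ⟨N, G, hG⟩ := hf
    let M : ℕ := ∑ i, (m j i).natAbs
    have hM (a : σ) : 0 ≤ M + m j a := by
      have : (m j a).natAbs ≤ M :=
        Finset.single_le_sum (f := fun i => (m j i).natAbs) (fun _ _ => Nat.zero_le _)
          (Finset.mem_univ a)
      lia
    refine ⟨N + M, G * ∏ a, X a ^ (M + m j a).toNat, fun ξ hξ => ?_⟩
    have hprod : ∏ a, ξ a ^ (M + m j a).toNat = (∏ a, ξ a) ^ M * laurentMonomial ξ (m j) := by
      rw [← Finset.prod_pow, laurentMonomial, ← Finset.prod_mul_distrib]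
      refine Finset.prod_congr rfl fun a _ => ?_
      rw [← zpow_natCast, Int.toNat_of_nonneg (hM a), zpow_add₀ (hξ a), zpow_natCast]
    simp only [map_mul, map_prod, map_pow, aeval_X, hG ξ hξ, hprod]
    ring

theorem ker_aeval_laurentMonomial_le {κ : Type*} {L L' : Type u} [Field L] [Algebra k L]
    [Field L'] [Algebra k L'] (m : κ → σ → ℤ) {ξ : σ → L} {ξ' : σ → L'} (hξ : ∀ i, ξ i ≠ 0)
    (hξ' : ∀ i, ξ' i ≠ 0) (h : RingHom.ker (aeval (R := k) ξ) ≤ RingHom.ker (aeval (R := k) ξ')) :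
    RingHom.ker (aeval (R := k) fun j => laurentMonomial ξ (m j)) ≤
      RingHom.ker (aeval (R := k) fun j => laurentMonomial ξ' (m j)) := by
  intro f hf
  obtain ⟨N, G, hG⟩ := exists_aeval_eq_prod_pow_mul_aeval_laurentMonomial m f
  have hGξ : aeval ξ G = 0 := by rw [hG ξ hξ, RingHom.mem_ker.1 hf, mul_zero]
  have hGξ' : aeval ξ' G = 0 := h hGξ
  rw [hG ξ' hξ'] at hGξ'
  exact (mul_eq_zero.1 hGξ').resolve_left
    (pow_ne_zero _ (Finset.prod_ne_zero_iff.2 fun i _ => hξ' i))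

theorem trdegSet_laurentMonomial_lt {κ : Type} [Finite κ] {m : κ → σ → ℤ} {c : k} {j : κ}
    {q q' : Ideal (MvPolynomial σ k)} [q.IsPrime] [q'.IsPrime] (hqq' : q ≤ q')
    (hX : ∀ i, X i ∉ q') (hq : binomialRelation c (m j) ∉ q)
    (hq' : binomialRelation c (m j) ∈ q') :
    trdegSet k (Set.range fun i => laurentMonomial (primeGenericPoint q') (m i)) <
      trdegSet k (Set.range fun i => laurentMonomial (primeGenericPoint q) (m i)) := by
  have hXq i (hi : X i ∈ q) := hX i (hqq' hi)
  have hker := ker_aeval_laurentMonomial_le m (primeGenericPoint_ne_zero hXq)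
    (primeGenericPoint_ne_zero hX)
    (by rwa [ker_aeval_primeGenericPoint, ker_aeval_primeGenericPoint])
  refine trdegSet_range_lt_of_ker_aeval_lt
    (SetLike.lt_iff_le_and_exists.2 ⟨hker, X j - C c, ?_, ?_⟩)
  · simp [(binomialRelation_mem_iff hX).1 hq']
  · simpa [sub_eq_zero] using fun h => hq ((binomialRelation_mem_iff hXq).2 h)

theorem exists_isPrime_forall_binomialRelation_mem {σ κ : Type} [Fintype σ] [Finite κ] {k : Type*}
    [Field k] {m : κ → σ → ℤ} {c : κ → k} {M : Ideal (MvPolynomial σ k)} [M.IsPrime]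
    (hX : ∀ i, X i ∉ M) (hM : ∀ j, binomialRelation (c j) (m j) ∈ M)
    (q : Ideal (MvPolynomial σ k)) [q.IsPrime] (hqM : q ≤ M) :
    ∃ q' : Ideal (MvPolynomial σ k), q'.IsPrime ∧ q ≤ q' ∧ q' ≤ M ∧
      (∀ j, binomialRelation (c j) (m j) ∈ q') ∧
      quotientTrdeg k q ≤ quotientTrdeg k q' +
        trdegSet k (Set.range fun j => laurentMonomial (primeGenericPoint q) (m j)) := by
  induction hd : trdegSet k (Set.range fun j => laurentMonomial (primeGenericPoint q) (m j))
    using Nat.strong_induction_on generalizing q with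
  | _ d ih =>
    by_cases hall : ∀ j, binomialRelation (c j) (m j) ∈ q
    · exact ⟨q, inferInstance, le_rfl, hqM, hall, Nat.le_add_right _ _⟩
    · push Not at hall
      obtain ⟨j, hj⟩ := hall
      obtain ⟨q₁, _, hqq₁, hq₁M, hjq₁, hle⟩ :=
        exists_isPrime_le_quotientTrdeg_add_one k hqM hj (hM j)
      have hlt := trdegSet_laurentMonomial_lt hqq₁ (fun i hi => hX i (hq₁M hi)) hj hjq₁
      obtain ⟨q', hq', hq₁q', hq'M, hq'all, hle'⟩ := ih _ (hlt.trans_eq hd) q₁ hq₁M rfl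
      exact ⟨q', hq', hqq₁.trans hq₁q', hq'M, hq'all, by lia⟩

end MonomialRelations

section TorusCharacters

open MvPolynomial

variable {n : ℕ} {κ : Type*}

/-- The character `x ↦ x ^ m` of the torus with exponents `m`. -/
def torusCharacter (m : Fin n → ℤ) : TorusPt n →* Qbarˣ :=
  ∏ i, (zpowGroupHom (m i)).comp (Pi.evalMonoidHom _ i)

theorem torusCharacter_apply (m : Fin n → ℤ) (x : TorusPt n) :
    torusCharacter m x = ∏ i, x i ^ m i := by
  simp [torusCharacter]

theorem coe_torusCharacter (m : Fin n → ℤ) (x : TorusPt n) :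
    (torusCharacter m x : Qbar) = laurentMonomial (fun i => (x i : Qbar)) m := by
  simp [torusCharacter_apply, laurentMonomial]

theorem torusCharacter_sub (m m' : Fin n → ℤ) :
    torusCharacter (m - m') = torusCharacter m / torusCharacter m' := by
  refine MonoidHom.ext fun x => ?_
  simp [torusCharacter_apply, zpow_sub, Finset.prod_mul_distrib, div_eq_mul_inv]

theorem binomialRelation_mem_pointIdeal_iff {m : Fin n → ℤ} {c : Qbarˣ} {x : TorusPt n} :
    binomialRelation (c : Qbar) m ∈ pointIdeal x ↔ torusCharacter m x = c := by
  rw [mem_pointIdeal, ← aeval_eq_eval,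
    aeval_binomialRelation_eq_zero_iff fun i => (x i).ne_zero, ← coe_torusCharacter]
  exact Units.val_inj

/-- The coset through `p` of the subgroup on which the characters with exponents `m j` are
trivial. -/
def characterCoset (m : κ → Fin n → ℤ) (p : TorusPt n) : Set (TorusPt n) :=
  {x | ∀ j, torusCharacter (m j) x = torusCharacter (m j) p}

theorem isCoset_characterCoset (m : κ → Fin n → ℤ) (p : TorusPt n) :
    IsCoset (characterCoset m p) := by
  let H : Subgroup (TorusPt n) := ⨅ j, (torusCharacter (m j)).ker
  have hH {x : TorusPt n} : x ∈ H ↔ ∀ j, torusCharacter (m j) x = 1 := by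
    simp only [H, Subgroup.mem_iInf, MonoidHom.mem_ker]
  refine ⟨p, H, ⟨⟨Set.range fun j => binomialRelation ((1 : Qbarˣ) : Qbar) (m j), ?_⟩, H.one_mem,
    fun x hx y hy => H.mul_mem hx hy, fun x hx => H.inv_mem hx⟩, ?_⟩
  · ext x
    simp only [SetLike.mem_coe, hH, Set.mem_ofPred_eq, Set.forall_mem_range, ← mem_pointIdeal,
      binomialRelation_mem_pointIdeal_iff]
  · ext x
    simp only [characterCoset, Set.mem_ofPred_eq, Set.image_mul_left, Set.mem_preimage,
      SetLike.mem_coe, hH, map_mul, map_inv, inv_mul_eq_one]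
    exact forall_congr' fun j => eq_comm

theorem le_zdim_characterCoset_add_card {κ : Type} [Fintype κ] (m : κ → Fin n → ℤ)
    (p : TorusPt n) : n ≤ zdim (characterCoset m p) + Fintype.card κ := by
  have hX := X_notMem_of_le_pointIdeal (le_refl (pointIdeal p))
  obtain ⟨q, _, -, hqp, hq, hle⟩ := exists_isPrime_forall_binomialRelation_mem (m := m) hX
    (fun j => binomialRelation_mem_pointIdeal_iff.2 rfl) ⊥ bot_le
  rw [quotientTrdeg_bot, Fintype.card_fin] at hle
  have hcard : trdegSet Qbar (Set.range fun j =>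
      laurentMonomial (primeGenericPoint (⊥ : Ideal (CoordRing n))) (m j)) ≤ Fintype.card κ :=
    (trdegSet_le_ncard (Set.finite_range _)).trans
      ((Finite.card_range_le _).trans_eq Nat.card_eq_fintype_card)
  have hdim : quotientTrdeg Qbar q ≤ zdim (characterCoset m p) := by
    rw [← zdim_torusLocus fun i hi => hX i (hqp hi)]
    exact zdim_mono fun x hx j => binomialRelation_mem_pointIdeal_iff.1 (hx (hq j))
  lia

theorem laurentMonomial_primeGenericPoint_torusIdeal {Y : Set (TorusPt n)}
    [(torusIdeal Y).IsPrime] (hY : Y.Nonempty) {m : Fin n → ℤ} {c : Qbarˣ}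
    (h : ∀ x ∈ Y, torusCharacter m x = c) :
    laurentMonomial (primeGenericPoint (torusIdeal Y)) m = algebraMap Qbar _ c := by
  rw [← binomialRelation_mem_iff (X_notMem_torusIdeal hY), mem_torusIdeal]
  exact fun x hx => binomialRelation_mem_pointIdeal_iff.2 (h x hx)

theorem zdim_characterCoset_add_card_le [Fintype κ] {m : κ → Fin n → ℤ}
    (hm : LinearIndependent ℤ m) (p : TorusPt n) :
    zdim (characterCoset m p) + Fintype.card κ ≤ n := by
  have hcard : Fintype.card κ ≤ n := by simpa using hm.fintype_card_le_finrank
  have hdim : zdim (characterCoset m p) ≤ n - Fintype.card κ := by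
    refine zdim_le fun Y hY _ hirr => ?_
    have := isPrime_torusIdeal hirr
    have hX := X_notMem_torusIdeal hirr.1
    have hle := trdegSet_range_add_card_le (k := Qbar) (primeGenericPoint_ne_zero hX) hm fun j =>
      ⟨_, (laurentMonomial_primeGenericPoint_torusIdeal hirr.1 fun x hx => hY hx j).symm⟩
    rw [trdegSet_range_primeGenericPoint, Fintype.card_fin] at hle
    lia
  lia

end TorusCharacters

section CosetEquations

theorem sum_mul_eq_zero_of_factorsThrough {M K A : Type*} [Monoid M] [CommRing K] [IsDomain K]
    {s : Finset A} {c : A → K} {χ : A → M →* K} {φ : A → K} (hφ : φ.FactorsThrough χ)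
    (h : ∀ x, ∑ a ∈ s, c a * χ a x = 0) : ∑ a ∈ s, c a * φ a = 0 := by
  let l : (M →* K) →₀ K := ∑ a ∈ s, Finsupp.single (χ a) (c a)
  have hl : l = 0 := by
    refine linearIndependent_iff.1 (linearIndependent_monoidHom M K) l (funext fun x => ?_)
    simpa only [l, map_sum, Finsupp.linearCombination_single, Finset.sum_apply, Pi.smul_apply,
      smul_eq_mul, Pi.zero_apply] using h x
  have hφl := congrArg (Finsupp.linearCombination K (Function.extend χ φ 0)) hl
  simpa only [l, map_sum, Finsupp.linearCombination_single, map_zero, hφ.extend_apply,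
    smul_eq_mul] using hφl

variable {n : ℕ}

/-- The lattice of exponents of the characters that are trivial on `S`. -/
def trivialExponents (S : Set (TorusPt n)) : Submodule ℤ (Fin n → ℤ) where
  carrier := {m | ∀ x ∈ S, torusCharacter m x = 1}
  add_mem' ha hb x hx := by
    simpa [torusCharacter_apply, zpow_add, Finset.prod_mul_distrib] using
      congrArg₂ (· * ·) (ha x hx) (hb x hx)
  zero_mem' x _ := by simp [torusCharacter_apply]
  smul_mem' r m hm x hx := by
    simpa [torusCharacter_apply, mul_comm r, zpow_mul, Finset.prod_zpow] using
      congrArg (· ^ r) (hm x hx)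

theorem mem_trivialExponents {S : Set (TorusPt n)} {m : Fin n → ℤ} :
    m ∈ trivialExponents S ↔ ∀ x ∈ S, torusCharacter m x = 1 :=
  Iff.rfl

theorem eval_eq_sum_torusCharacter (f : CoordRing n) (x : TorusPt n) :
    MvPolynomial.eval (fun i => (x i : Qbar)) f =
      ∑ a ∈ f.support, f.coeff a * (torusCharacter (fun i => (a i : ℤ)) x : Qbar) := by
  simp [MvPolynomial.eval_eq', torusCharacter_apply]

theorem mem_of_trivialExponents_le {H : Set (TorusPt n)} (hH : IsAlgSubgroup H) {x : TorusPt n}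
    (hx : trivialExponents H ≤ trivialExponents {x}) : x ∈ H := by
  obtain ⟨hclosed, hone, hmul, -⟩ := hH
  let N : Submonoid (TorusPt n) :=
    { carrier := H, one_mem' := hone, mul_mem' := fun hy hz => hmul _ hy _ hz }
  let χ : (Fin n →₀ ℕ) → N →* Qbar := fun a =>
    (Units.coeHom Qbar).comp ((torusCharacter fun i => (a i : ℤ)).comp N.subtype)
  let φ : (Fin n →₀ ℕ) → Qbar := fun a => (torusCharacter (fun i => (a i : ℤ)) x : Qbar)
  have hφ : φ.FactorsThrough χ := fun a b hab => by
    have hmem : (fun i => (a i : ℤ)) - (fun i => (b i : ℤ)) ∈ trivialExponents H := fun y hy => by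
      rw [torusCharacter_sub, MonoidHom.div_apply, div_eq_one]
      have hab_y := DFunLike.congr_fun hab (⟨y, hy⟩ : N)
      exact Units.ext hab_y
    have hab_x := hx hmem x rfl
    rw [torusCharacter_sub, MonoidHom.div_apply, div_eq_one] at hab_x
    exact congrArg Units.val hab_x
  rw [← torusLocus_torusIdeal hclosed]
  intro f hf
  rw [mem_pointIdeal, eval_eq_sum_torusCharacter]
  refine sum_mul_eq_zero_of_factorsThrough hφ fun y => ?_
  rw [← mem_torusIdeal.1 hf y y.2, eval_eq_sum_torusCharacter]
  rfl

theorem exists_eq_characterCoset {C : Set (TorusPt n)} (hC : IsCoset C) :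
    ∃ (ρ : ℕ) (m : Fin ρ → Fin n → ℤ) (g : TorusPt n),
      LinearIndependent ℤ m ∧ C = characterCoset m g := by
  obtain ⟨g, H, hH, rfl⟩ := hC
  obtain ⟨ρ, b⟩ := Submodule.basisOfPid (Pi.basisFun ℤ (Fin n)) (trivialExponents H)
  refine ⟨ρ, fun j => b j, g, b.linearIndependent.map' (Submodule.subtype _)
    (Submodule.ker_subtype _), Set.Subset.antisymm ?_ fun x hx => ⟨g⁻¹ * x, ?_, by simp⟩⟩
  · rintro _ ⟨h, hh, rfl⟩ j
    simp only [map_mul, mem_trivialExponents.1 (b j).2 h hh, mul_one]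
  · refine mem_of_trivialExponents_le hH ?_
    have hspan : Submodule.span ℤ (Set.range fun j => (b j : Fin n → ℤ)) = trivialExponents H := by
      have h := congrArg (Submodule.map (Submodule.subtype _)) b.span_eq
      rwa [Submodule.map_span, ← Set.range_comp, Submodule.map_subtype_top] at h
    rw [← hspan, Submodule.span_le]
    rintro _ ⟨j, rfl⟩ _ rfl
    simp only [map_mul, map_inv, hx j, inv_mul_cancel]

end CosetEquations

section AnomalousDlogSystem

/-- The subsystem of a `DlogSystem` on a subfamily of the derivations and of the relations. -/
def DlogSystem.restrict {k L ι β γ β' γ' : Type*} [Field k] [Field L] [Algebra k L] [Fintype ι]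
    {ξ : ι → L} (S : DlogSystem k ξ β γ) (f : β' ↪ β) (g : γ' ↪ γ) : DlogSystem k ξ β' γ' where
  der j := S.der (f j)
  coeff i := S.coeff (g i)
  linearIndependent_dlog := S.linearIndependent_dlog.comp f f.injective
  linearIndependent_coeff := S.linearIndependent_coeff.comp g g.injective
  der_coeff j i a := S.der_coeff (f j) (g i) a
  sum_coeff_mul_dlog j i := S.sum_coeff_mul_dlog (f j) (g i)

theorem nonempty_dlogSystem_of_laurentMonomial_mem_range {k L ι κ : Type*} [Field k] [Field L]
    [Algebra k L] [CharZero L] [Fintype ι] {ξ : ι → L} (hξ : ∀ i, ξ i ≠ 0) {m : κ → ι → ℤ}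
    (hm : LinearIndependent ℤ m) (h : ∀ j, laurentMonomial ξ (m j) ∈ Set.range (algebraMap k L)) :
    Nonempty (DlogSystem k ξ (Fin (trdegSet k (Set.range ξ))) κ) := by
  obtain ⟨D, hD⟩ := exists_linearIndependent_dlog (k := k) ξ
  refine ⟨⟨D, fun j a => (m j a : L), hD, linearIndependent_intCast hm,
    fun j i a => (D j).map_intCast _, fun j i => ?_⟩⟩
  obtain ⟨c, hc⟩ := h i
  rw [← dlog_laurentMonomial _ hξ, ← hc]
  exact dlog_eq_zero _ (Derivation.map_algebraMap _ _)

variable {n : ℕ} {X Y : Set (TorusPt n)} {s : ℕ}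

theorem IsAnomalous.exists_dlogSystem (hY : IsAnomalous X Y s) [(torusIdeal Y).IsPrime] :
    ∃ i : Fin (s + 1), Nonempty
      (DlogSystem Qbar (primeGenericPoint (torusIdeal Y)) (Fin (i + 1)) (Fin (s - i))) := by
  obtain ⟨-, hclosed, hirr, hpos, C, hC, hYC, hlt⟩ := hY
  obtain ⟨ρ, m, g, hm, rfl⟩ := exists_eq_characterCoset hC
  have hle := le_zdim_characterCoset_add_card m g
  rw [Fintype.card_fin] at hle
  rw [zdim_eq_quotientTrdeg hclosed hirr, ← trdegSet_range_primeGenericPoint] at hpos hlt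
  obtain ⟨S⟩ := nonempty_dlogSystem_of_laurentMonomial_mem_range
    (primeGenericPoint_ne_zero (X_notMem_torusIdeal hirr.1)) hm fun j =>
      ⟨_, (laurentMonomial_primeGenericPoint_torusIdeal hirr.1 fun x hx => hYC hx j).symm⟩
  let i : ℕ := min (trdegSet Qbar (Set.range (primeGenericPoint (torusIdeal Y))) - 1) s
  exact ⟨⟨i, by lia⟩, ⟨S.restrict (Fin.castLEEmb (by lia)) (Fin.castLEEmb (by lia))⟩⟩

end AnomalousDlogSystem

section Ultraproducts

variable {I : Type*} (U : Ultrafilter I) (F : I → Type*) [∀ i, Field (F i)]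

/-- The ideal of families of field elements that vanish almost everywhere with respect to an
ultrafilter. The quotient by it is the ultraproduct of the fields. -/
def ultraIdeal : Ideal (∀ i, F i) where
  carrier := {x | ∀ᶠ i in U, x i = 0}
  add_mem' hx hy := by
    filter_upwards [hx, hy] with i hxi hyi
    rw [Pi.add_apply, hxi, hyi, add_zero]
  zero_mem' := .of_forall fun _ => rfl
  smul_mem' c x hx := by
    filter_upwards [hx] with i hxi
    rw [Pi.smul_apply', hxi, smul_zero]

variable {U F} in
theorem mem_ultraIdeal {x : ∀ i, F i} : x ∈ ultraIdeal U F ↔ ∀ᶠ i in U, x i = 0 :=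
  Iff.rfl

instance isMaximal_ultraIdeal : (ultraIdeal U F).IsMaximal := by
  refine Ideal.isMaximal_iff.2 ⟨fun h => ?_, fun J x hJ hx hxJ => ?_⟩
  · obtain ⟨i, hi⟩ := (mem_ultraIdeal.1 h).exists
    exact one_ne_zero hi
  · have hmem : 1 - x⁻¹ * x ∈ ultraIdeal U F := by
      filter_upwards [Ultrafilter.eventually_not.2 hx] with i hi
      rw [Pi.sub_apply, Pi.mul_apply, Pi.inv_apply, inv_mul_cancel₀ hi, Pi.one_apply, sub_self]
    simpa using J.add_mem (hJ hmem) (J.mul_mem_left x⁻¹ hxJ)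

/-- The ultraproduct of a family of fields. -/
abbrev FieldUltraproduct : Type _ := (∀ i, F i) ⧸ ultraIdeal U F

instance field_fieldUltraproduct : Field (FieldUltraproduct U F) :=
  Ideal.Quotient.field _

variable {F}

/-- The homomorphism sending a family to the element of the ultraproduct that it represents. -/
abbrev ultraMk : (∀ i, F i) →+* FieldUltraproduct U F :=
  Ideal.Quotient.mk _

variable {U} in
theorem ultraMk_eq_zero_iff {x : ∀ i, F i} : ultraMk U x = 0 ↔ ∀ᶠ i in U, x i = 0 :=
  Ideal.Quotient.eq_zero_iff_mem

variable {U} in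
theorem ultraMk_surjective : Function.Surjective (ultraMk (F := F) U) :=
  Ideal.Quotient.mk_surjective

theorem ultraMk_div (x y : ∀ i, F i) : ultraMk U (x / y) = ultraMk U x / ultraMk U y := by
  by_cases hy : ultraMk U y = 0
  · rw [hy, div_zero, ultraMk_eq_zero_iff]
    filter_upwards [ultraMk_eq_zero_iff.1 hy] with i hi
    rw [Pi.div_apply, hi, div_zero]
  · rw [eq_div_iff hy, ← map_mul, ← sub_eq_zero, ← map_sub, ultraMk_eq_zero_iff]
    filter_upwards [Ultrafilter.eventually_not.2 (mt ultraMk_eq_zero_iff.2 hy)] with i hi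
    rw [Pi.sub_apply, Pi.mul_apply, Pi.div_apply, div_mul_cancel₀ _ hi, sub_self]

theorem linearIndependent_ultraMk {γ ι : Type*} [Finite γ] [Finite ι] {v : ∀ i, γ → ι → F i}
    (hv : ∀ i, LinearIndependent (F i) (v i)) :
    LinearIndependent (FieldUltraproduct U F) fun j a => ultraMk U fun i => v i j a := by
  have := Fintype.ofFinite γ
  refine Fintype.linearIndependent_iff.2 fun g hg => ?_
  choose G hG using fun j => ultraMk_surjective (g j)
  have hlin (a : ι) : ultraMk U (fun i => ∑ j, G j i * v i j a) = 0 := by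
    have hsum : (fun i => ∑ j, G j i * v i j a) = ∑ j, G j * fun i => v i j a := by
      ext i
      simp only [Finset.sum_apply, Pi.mul_apply]
    have h := congrFun hg a
    simp only [Finset.sum_apply, Pi.smul_apply, smul_eq_mul, Pi.zero_apply] at h
    simpa only [hsum, map_sum, map_mul, hG] using h
  have hzero : ∀ᶠ i in U, ∀ j, G j i = 0 := by
    filter_upwards [Filter.eventually_all.2 fun a => ultraMk_eq_zero_iff.1 (hlin a)] with i hi
    refine Fintype.linearIndependent_iff.1 (hv i) (fun j => G j i) (funext fun a => ?_)
    simpa only [Finset.sum_apply, Pi.smul_apply, smul_eq_mul, Pi.zero_apply] using hi a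
  exact fun j => (hG j).symm.trans (ultraMk_eq_zero_iff.2 (hzero.mono fun i hi => hi j))

variable {k : Type*} [Field k] [∀ i, Algebra k (F i)]

/-- The derivation of a product acting on each component by the given derivation. -/
def piDerivation (D : ∀ i, Derivation k (F i) (F i)) : Derivation k (∀ i, F i) (∀ i, F i) :=
  Derivation.mk' (LinearMap.pi fun i => (D i).toLinearMap ∘ₗ LinearMap.proj i) fun x y =>
    funext fun i => (D i).leibniz (x i) (y i)

theorem piDerivation_apply (D : ∀ i, Derivation k (F i) (F i)) (x : ∀ i, F i) (i : I) :
    piDerivation D x i = D i (x i) :=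
  rfl

/-- The derivation of an ultraproduct induced by derivations of the factors. -/
def ultraDerivation (D : ∀ i, Derivation k (F i) (F i)) :
    Derivation k (FieldUltraproduct U F) (FieldUltraproduct U F) :=
  Derivation.liftOfSurjective (f := Ideal.Quotient.mkₐ k (ultraIdeal U F)) (d := piDerivation D)
    (Ideal.Quotient.mkₐ_surjective k _) fun x hx =>
      ultraMk_eq_zero_iff.2 <| (ultraMk_eq_zero_iff.1 hx).mono fun i hi => by
        rw [piDerivation_apply, hi, map_zero]

theorem ultraDerivation_ultraMk (D : ∀ i, Derivation k (F i) (F i)) (x : ∀ i, F i) :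
    ultraDerivation U D (ultraMk U x) = ultraMk U fun i => D i (x i) := by
  rw [ultraDerivation]
  exact Derivation.liftOfSurjective_apply (f := Ideal.Quotient.mkₐ k (ultraIdeal U F)) _ _ x

theorem dlog_ultraDerivation (D : ∀ i, Derivation k (F i) (F i)) (x : ∀ i, F i) :
    dlog (ultraDerivation U D) (ultraMk U x) = ultraMk U fun i => dlog (D i) (x i) := by
  rw [dlog, ultraDerivation_ultraMk, ← ultraMk_div]
  rfl

theorem aeval_ultraMk {σ : Type*} (ξ : ∀ i, σ → F i) (f : MvPolynomial σ k) :
    MvPolynomial.aeval (fun a => ultraMk U fun i => ξ i a) f =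
      ultraMk U fun i => MvPolynomial.aeval (ξ i) f := by
  let ζ : σ → ∀ i, F i := fun a i => ξ i a
  have hζ : MvPolynomial.aeval ζ f = fun i => MvPolynomial.aeval (ξ i) f :=
    funext fun i => MvPolynomial.comp_aeval_apply ζ (Pi.evalAlgHom k F i) f
  rw [← hζ]
  exact (MvPolynomial.comp_aeval_apply ζ (Ideal.Quotient.mkₐ k (ultraIdeal U F)) f).symm

/-- The ultraproduct of systems of logarithmic relations. -/
def DlogSystem.ultraproduct {ι β γ : Type*} [Fintype ι] [Finite β] [Finite γ] {ξ : ∀ i, ι → F i}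
    (S : ∀ i, DlogSystem k (ξ i) β γ) :
    DlogSystem k (fun a => ultraMk U fun i => ξ i a) β γ where
  der j := ultraDerivation U fun i => (S i).der j
  coeff l a := ultraMk U fun i => (S i).coeff l a
  linearIndependent_dlog := by
    simp only [dlog_ultraDerivation]
    exact linearIndependent_ultraMk U fun i => (S i).linearIndependent_dlog
  linearIndependent_coeff := linearIndependent_ultraMk U fun i => (S i).linearIndependent_coeff
  der_coeff j l a := by
    rw [ultraDerivation_ultraMk]
    exact ultraMk_eq_zero_iff.2 (.of_forall fun i => (S i).der_coeff j l a)
  sum_coeff_mul_dlog j l := by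
    simp only [dlog_ultraDerivation, ← map_mul, ← map_sum]
    refine ultraMk_eq_zero_iff.2 (.of_forall fun i => ?_)
    simpa only [Finset.sum_apply, Pi.mul_apply] using (S i).sum_coeff_mul_dlog j l

end Ultraproducts

section AnomalousClosure

open MvPolynomial

universe u

theorem exists_ultrafilter_forall_eventually_notMem {R ι : Type*} [CommSemiring R]
    {I : ι → Ideal R} {M : Ideal R} [hM : M.IsPrime] (h : ⨅ j, I j ≤ M) :
    ∃ U : Ultrafilter ι, ∀ g ∉ M, ∀ᶠ j in U, g ∉ I j := by
  let G : Filter ι := ⨅ g : {g // g ∉ M}, Filter.principal {j | g.1 ∉ I j}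
  have : Nonempty {g // g ∉ M} := ⟨1, hM.one_notMem⟩
  have : G.NeBot := by
    refine Filter.iInf_neBot_of_directed' (fun g g' => ?_) fun g => ?_
    · refine ⟨⟨g * g', fun hmem => (hM.mem_or_mem hmem).elim g.2 g'.2⟩, ?_, ?_⟩
      · exact Filter.principal_mono.2 fun j hj hg => hj (Ideal.mul_mem_right _ _ hg)
      · exact Filter.principal_mono.2 fun j hj hg => hj (Ideal.mul_mem_left _ _ hg)
    · by_contra hbot
      refine g.2 (h (Ideal.mem_iInf.2 fun j => not_not.1 fun hj => hbot ?_))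
      exact Filter.principal_neBot_iff.2 ⟨j, hj⟩
  exact ⟨Ultrafilter.of G, fun g hg =>
    Ultrafilter.of_le G (Filter.mem_iInf_of_mem ⟨g, hg⟩ (Filter.mem_principal_self _))⟩

theorem exists_dlogSystem_of_iInf_le {σ k ι : Type u} {β γ : Type*} [Fintype σ] [Finite β]
    [Finite γ] [Field k] {q : ι → Ideal (MvPolynomial σ k)} [∀ j, (q j).IsPrime]
    {M : Ideal (MvPolynomial σ k)} [M.IsPrime] (hM : ⨅ j, q j ≤ M)
    (S : ∀ j, DlogSystem k (primeGenericPoint (q j)) β γ) :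
    ∃ (L : Type u) (_ : Field L) (_ : Algebra k L) (ζ : σ → L), Nonempty (DlogSystem k ζ β γ) ∧
      ⨅ j, q j ≤ RingHom.ker (aeval (R := k) ζ) ∧ RingHom.ker (aeval (R := k) ζ) ≤ M := by
  obtain ⟨U, hU⟩ := exists_ultrafilter_forall_eventually_notMem hM
  let F (j : ι) := FractionRing (MvPolynomial σ k ⧸ q j)
  let ζ (a : σ) : FieldUltraproduct U F := ultraMk U fun j => primeGenericPoint (q j) a
  have hζ (f : MvPolynomial σ k) : aeval ζ f = 0 ↔ ∀ᶠ j in U, f ∈ q j := by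
    simp only [ζ, aeval_ultraMk, ultraMk_eq_zero_iff, aeval_primeGenericPoint_eq_zero_iff, F]
  refine ⟨FieldUltraproduct U F, inferInstance, inferInstance, ζ, ⟨DlogSystem.ultraproduct U S⟩,
    fun f hf => (hζ f).2 (.of_forall (Ideal.mem_iInf.1 hf)), fun f hf => ?_⟩
  by_contra hfM
  obtain ⟨j, hj, hj'⟩ := ((hU f hfM).and ((hζ f).1 hf)).exists
  exact hj hj'

variable {n : ℕ} {X : Set (TorusPt n)} {p : TorusPt n} {s : ℕ}

theorem DlogSystem.exists_isPrime_le_pointIdeal {L β γ : Type} [Field L] [Algebra Qbar L]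
    [Fintype β] [Fintype γ] {ζ : Fin n → L} (S : DlogSystem Qbar ζ β γ)
    (hp : RingHom.ker (aeval (R := Qbar) ζ) ≤ pointIdeal p) :
    ∃ (ρ : ℕ) (m : Fin ρ → Fin n → ℤ) (q : Ideal (CoordRing n)), LinearIndependent ℤ m ∧
      q.IsPrime ∧ RingHom.ker (aeval (R := Qbar) ζ) ≤ q ∧ q ≤ pointIdeal p ∧
      (∀ j, binomialRelation (torusCharacter (m j) p : Qbar) (m j) ∈ q) ∧
      Fintype.card β ≤ quotientTrdeg Qbar q ∧
      Fintype.card β + Fintype.card γ ≤ quotientTrdeg Qbar q + ρ := by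
  have : CharZero L := charZero_of_injective_algebraMap (algebraMap Qbar L).injective
  have : (RingHom.ker (aeval (R := Qbar) ζ)).IsPrime := RingHom.ker_isPrime _
  have hX := X_notMem_of_le_pointIdeal hp
  have hζ i (hi : ζ i = 0) : False := hX i (by rw [RingHom.mem_ker, aeval_X, hi])
  obtain ⟨ρ, m, hm, hβ, hβγ⟩ := S.exists_trdegSet_laurentMonomial_add_card_le hζ
  obtain ⟨q, hq, hζq, hqp, hrel, hle⟩ := exists_isPrime_forall_binomialRelation_mem
    (X_notMem_of_le_pointIdeal le_rfl) (fun j => binomialRelation_mem_pointIdeal_iff.2 rfl)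
    (RingHom.ker (aeval (R := Qbar) ζ)) hp (m := m) (c := fun j => (torusCharacter (m j) p : Qbar))
  have hmono := trdegSet_range_le_of_ker_aeval_le
    (ker_aeval_laurentMonomial_le m hζ (primeGenericPoint_ne_zero hX)
      (ker_aeval_primeGenericPoint _).ge)
  rw [quotientTrdeg_ker_aeval] at hle
  exact ⟨ρ, m, q, hm, hq, hζq, hqp, hrel, by lia, by lia⟩

theorem DlogSystem.exists_isAnomalous {L β γ : Type} [Field L] [Algebra Qbar L] [Fintype β]
    [Fintype γ] {ζ : Fin n → L} (S : DlogSystem Qbar ζ β γ) (hX : ZClosed X)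
    (hβ : 1 ≤ Fintype.card β) (hs : s < Fintype.card β + Fintype.card γ)
    (hXζ : torusIdeal X ≤ RingHom.ker (aeval (R := Qbar) ζ))
    (hp : RingHom.ker (aeval (R := Qbar) ζ) ≤ pointIdeal p) : ∃ Y, IsAnomalous X Y s ∧ p ∈ Y := by
  obtain ⟨ρ, m, q, hm, _, hζq, hqp, hrel, hdim, hdim'⟩ := S.exists_isPrime_le_pointIdeal hp
  have hXq := X_notMem_of_le_pointIdeal hqp
  have hsub : torusLocus q ⊆ X := by
    rw [← torusLocus_torusIdeal hX]
    exact torusLocus_anti (hXζ.trans hζq)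
  have hcoset := zdim_characterCoset_add_card_le hm p
  rw [Fintype.card_fin] at hcoset
  rw [← zdim_torusLocus hXq] at hdim hdim'
  exact ⟨torusLocus q, ⟨hsub, zClosed_torusLocus q, zIrred_torusLocus hXq, hβ.trans hdim,
    characterCoset m p, isCoset_characterCoset m p,
    fun x hx j => binomialRelation_mem_pointIdeal_iff.1 (hx (hrel j)), by lia⟩, hqp⟩

theorem exists_isAnomalous_mem_of_torusIdeal_iUnion_le (hX : ZClosed X)
    (hp : torusIdeal (⋃ (Y : Set (TorusPt n)) (_ : IsAnomalous X Y s), Y) ≤ pointIdeal p) :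
    ∃ Y, IsAnomalous X Y s ∧ p ∈ Y := by
  let A (i : Fin (s + 1)) := {Y : Set (TorusPt n) // IsAnomalous X Y s ∧
    ∃ _ : (torusIdeal Y).IsPrime, Nonempty
      (DlogSystem Qbar (primeGenericPoint (torusIdeal Y)) (Fin (i + 1)) (Fin (s - i)))}
  have hA : Finset.univ.inf (fun i => ⨅ Y : A i, torusIdeal Y.1) ≤ pointIdeal p := by
    refine le_trans (fun f hf => mem_torusIdeal.2 fun x hx => ?_) hp
    obtain ⟨Y, hY, hxY⟩ := Set.mem_iUnion₂.1 hx
    have hprime := isPrime_torusIdeal hY.2.2.1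
    obtain ⟨i, hi⟩ := hY.exists_dlogSystem
    have hfi := Ideal.mem_iInf.1 ((Submodule.mem_finsetInf.1 hf) i (Finset.mem_univ i))
    exact mem_torusIdeal.1 (hfi ⟨Y, hY, hprime, hi⟩) x hxY
  obtain ⟨i, -, hi⟩ := (Ideal.IsPrime.inf_le' inferInstance).1 hA
  have (Y : A i) : (torusIdeal Y.1).IsPrime := Y.2.2.1
  obtain ⟨L, _, _, ζ, ⟨S⟩, hζ, hζp⟩ :=
    exists_dlogSystem_of_iInf_le hi fun Y => Y.2.2.2.some
  exact S.exists_isAnomalous hX (by simp) (by simp only [Fintype.card_fin]; lia)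
    ((le_iInf fun Y => torusIdeal_anti Y.2.1.1).trans hζ) hζp

end AnomalousClosure

theorem openAnom_is_open_general {n : ℕ} {X : Set (TorusPt n)} (hX : ZClosed X) (s : ℕ) :
    ∃ Z : Set (TorusPt n), ZClosed Z ∧ openAnom X s = X \ Z := by
  let A : Set (TorusPt n) := ⋃ (Y : Set (TorusPt n)) (_ : IsAnomalous X Y s), Y
  have hA : A = torusLocus (torusIdeal A) := by
    refine (le_torusIdeal_iff.1 le_rfl).antisymm fun p hp => ?_
    obtain ⟨Y, hY, hpY⟩ := exists_isAnomalous_mem_of_torusIdeal_iUnion_le hX hp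
    exact Set.mem_iUnion₂.2 ⟨Y, hY, hpY⟩
  exact ⟨A, hA ▸ zClosed_torusLocus _, rfl⟩

/-- `X^{oa}` is a Zariski open subset of `X`. -/
theorem openAnom_is_open
    (n : ℕ) (X : Set (TorusPt n)) (hXcl : ZClosed X) (hXirr : ZIrred X) :
    ∃ Z : Set (TorusPt n), ZClosed Z ∧ openAnom X (zdim X) = X \ Z :=
  openAnom_is_open_general hXcl (zdim X)

end
end

section
/- (Schlickewei; as used in the paper) For every positive integer r there is a constant c_r > 0 with the following property: every finitely generated multiplicative subgroup of ℚ̄* whose torsion-free part has rank r admits generators g_1,...,g_r of its torsion-free part such that for all integers b_1,...,b_r one has h(g_1^{b_1}···g_r^{b_r}) ≥ c_r(|b_1| h(g_1) + ... + |b_r| h(g_r)). -/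
noncomputable section

/-- `g 0, ..., g (r-1)` are generators of the torsion-free part of `Γ`:
every element of `Γ` is uniquely a root of unity times a product of integer
powers of the `g j`. -/
def IsFreePart {r : ℕ} (Γ : Subgroup Qbarˣ) (g : Fin r → Qbarˣ) : Prop :=
  (∀ j, g j ∈ Γ) ∧ ∀ x ∈ Γ, ∃! m : Fin r → ℤ,
    ∃ ζ : Qbarˣ, ζ ∈ Γ ∧ (∃ k : ℕ, 1 ≤ k ∧ ζ ^ k = 1) ∧ x = ζ * ∏ j, g j ^ m j

/-!
By Gauss's lemma and the product formula, summing the local heights of the roots of a primitive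
integer polynomial over all places of a Galois number field `K` gives its Mahler measure. Hence the
Weil height is a Galois average of heights defined place by place, so it is subadditive and
homogeneous; with Northcott's theorem it becomes a norm with finite balls on the exponent lattice
`ℤ ^ r`. Any such norm admits a quasi-orthogonal basis: split off a shortest vector `g` and lift a
basis of the quotient by `g` with bounded distortion, which costs a factor `1 / 9` per rank.
-/

/-- A `ℤ`-seminorm on an abelian group: a subadditive real function that is absolutely homogeneous
under multiplication by integers. -/
structure IsZSeminorm {A : Type*} [AddCommGroup A] (N : A → ℝ) : Prop where
  add_le : ∀ x y, N (x + y) ≤ N x + N y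
  zsmul : ∀ (n : ℤ) x, N (n • x) = |(n : ℝ)| * N x

namespace IsZSeminorm

variable {A : Type*} [AddCommGroup A] {N : A → ℝ}

lemma nsmul (h : IsZSeminorm N) (n : ℕ) (x : A) : N (n • x) = n * N x := by
  simpa using h.zsmul n x

lemma zero (h : IsZSeminorm N) : N 0 = 0 := by
  simpa using h.zsmul 0 0

lemma neg (h : IsZSeminorm N) (x : A) : N (-x) = N x := by
  simpa using h.zsmul (-1) x

lemma nonneg (h : IsZSeminorm N) (x : A) : 0 ≤ N x := by
  have hle : N (x + -x) ≤ N x + N (-x) := h.add_le x (-x)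
  rw [add_neg_cancel, h.zero, h.neg] at hle
  linarith

lemma sum_zsmul_le (h : IsZSeminorm N) {ι : Type*} (s : Finset ι) (a : ι → ℤ) (x : ι → A) :
    N (∑ j ∈ s, a j • x j) ≤ ∑ j ∈ s, |(a j : ℝ)| * N (x j) := by
  simpa only [h.zsmul] using
    Finset.le_sum_of_subadditive N h.zero.le h.add_le s fun j => a j • x j

lemma isTorsionFree (h : IsZSeminorm N) (h0 : ∀ x, N x = 0 → x = 0) :
    Module.IsTorsionFree ℤ A := by
  refine Module.IsTorsionFree.of_smul_eq_zero fun n x hnx => ?_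
  have hN : |(n : ℝ)| * N x = 0 := by rw [← h.zsmul, hnx, h.zero]
  exact (mul_eq_zero.1 hN).imp (by simp) (h0 x)

end IsZSeminorm

/-- A `ℤ`-seminorm with finite balls, such as the restriction of a norm on a real vector space to
a lattice. -/
structure IsLatticeNorm {A : Type*} [AddCommGroup A] (N : A → ℝ) : Prop
    extends IsZSeminorm N where
  finite_le : ∀ B : ℝ, {x | N x ≤ B}.Finite

namespace IsLatticeNorm

variable {A : Type*} [AddCommGroup A] {N : A → ℝ}

lemma pos (h : IsLatticeNorm N) [Module.IsTorsionFree ℤ A] {x : A} (hx : x ≠ 0) : 0 < N x := by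
  refine (h.nonneg x).lt_of_ne fun h0 => ?_
  have hinj : Function.Injective fun n : ℤ => n • x := smul_left_injective ℤ hx
  refine Set.infinite_range_of_injective hinj ((h.finite_le 0).subset ?_)
  rintro _ ⟨n, rfl⟩
  simp [h.zsmul, ← h0]

lemma exists_ne_zero_forall_le (h : IsLatticeNorm N) [Nontrivial A] :
    ∃ g : A, g ≠ 0 ∧ ∀ x, x ≠ 0 → N g ≤ N x := by
  obtain ⟨x₀, hx₀⟩ := exists_ne (0 : A)
  obtain ⟨g, ⟨hgx₀, hg⟩, hmin⟩ := Set.exists_min_image ({x | N x ≤ N x₀} ∩ {x | x ≠ 0}) N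
    ((h.finite_le (N x₀)).inter_of_left _) ⟨x₀, le_refl (N x₀), hx₀⟩
  refine ⟨g, hg, fun x hx => ?_⟩
  rcases le_or_gt (N x) (N x₀) with hle | hlt
  · exact hmin x ⟨hle, hx⟩
  · exact hgx₀.trans hlt.le

end IsLatticeNorm

/-- The stable quotient norm `q ↦ inf {N y / n | y lifts n • q, n ≥ 1}`. Passing to multiples of
`q` makes it homogeneous, which the naive quotient norm (only `n = 1`) is not. -/
def stableQuotientNorm {A : Type*} [AddCommGroup A] (N : A → ℝ) (M : Submodule ℤ A) (q : A ⧸ M) :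
    ℝ :=
  ⨅ p : {p : ℕ+ × A // M.mkQ p.2 = (p.1 : ℕ) • q}, N p.1.2 / p.1.1

section StableQuotientNorm

variable {A : Type*} [AddCommGroup A] {N : A → ℝ} (M : Submodule ℤ A)

instance (q : A ⧸ M) : Nonempty {p : ℕ+ × A // M.mkQ p.2 = (p.1 : ℕ) • q} := by
  obtain ⟨x, hx⟩ := M.mkQ_surjective q
  exact ⟨⟨(1, x), by simpa using hx⟩⟩

variable {M}

lemma exists_div_lt_of_stableQuotientNorm_lt {q : A ⧸ M} {t : ℝ}
    (ht : stableQuotientNorm N M q < t) :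
    ∃ n : ℕ, 0 < n ∧ ∃ y : A, M.mkQ y = n • q ∧ N y / n < t := by
  obtain ⟨⟨⟨n, y⟩, hy⟩, hlt⟩ := exists_lt_of_ciInf_lt ht
  exact ⟨n, n.pos, y, hy, hlt⟩

lemma le_stableQuotientNorm {q : A ⧸ M} {t : ℝ}
    (ht : ∀ (n : ℕ) (y : A), 0 < n → M.mkQ y = n • q → t ≤ N y / n) :
    t ≤ stableQuotientNorm N M q :=
  le_ciInf fun p => ht p.1.1 p.1.2 p.1.1.pos p.2

namespace IsZSeminorm

lemma stableQuotientNorm_le_div (h : IsZSeminorm N) {q : A ⧸ M} {n : ℕ} (hn : 0 < n) {y : A}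
    (hy : M.mkQ y = n • q) : stableQuotientNorm N M q ≤ N y / n := by
  refine ciInf_le ⟨0, ?_⟩ (⟨(⟨n, hn⟩, y), hy⟩ : {p : ℕ+ × A // M.mkQ p.2 = (p.1 : ℕ) • q})
  rintro _ ⟨p, rfl⟩
  exact div_nonneg (h.nonneg _) (Nat.cast_nonneg _)

lemma stableQuotientNorm_mkQ_le (h : IsZSeminorm N) (x : A) :
    stableQuotientNorm N M (M.mkQ x) ≤ N x := by
  simpa using h.stableQuotientNorm_le_div one_pos (one_nsmul (M.mkQ x)).symm

lemma stableQuotientNorm_add_le (h : IsZSeminorm N) (q q' : A ⧸ M) :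
    stableQuotientNorm N M (q + q') ≤ stableQuotientNorm N M q + stableQuotientNorm N M q' := by
  refine le_of_forall_pos_lt_add fun ε hε => ?_
  obtain ⟨n, hn, y, hy, hlt⟩ :=
    exists_div_lt_of_stableQuotientNorm_lt (lt_add_of_pos_right (stableQuotientNorm N M q)
      (half_pos hε))
  obtain ⟨m, hm, z, hz, hlt'⟩ :=
    exists_div_lt_of_stableQuotientNorm_lt (lt_add_of_pos_right (stableQuotientNorm N M q')
      (half_pos hε))
  have hlift : M.mkQ (m • y + n • z) = (n * m) • (q + q') := by
    rw [map_add, map_nsmul, map_nsmul, hy, hz, nsmul_add, mul_nsmul, mul_nsmul']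
  calc stableQuotientNorm N M (q + q') ≤ N (m • y + n • z) / (n * m : ℕ) :=
        h.stableQuotientNorm_le_div (by positivity) hlift
    _ ≤ (m * N y + n * N z) / (n * m : ℕ) := by
        gcongr
        simpa only [h.nsmul] using h.add_le (m • y) (n • z)
    _ = N y / n + N z / m := by push_cast; field_simp
    _ < stableQuotientNorm N M q + stableQuotientNorm N M q' + ε := by linarith

lemma stableQuotientNorm_zsmul (h : IsZSeminorm N) (k : ℤ) (q : A ⧸ M) :
    stableQuotientNorm N M (k • q) = |(k : ℝ)| * stableQuotientNorm N M q := by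
  apply le_antisymm
  · rw [stableQuotientNorm.eq_def N M q, Real.mul_iInf_of_nonneg (abs_nonneg _)]
    refine le_ciInf fun ⟨⟨n, y⟩, hy⟩ => ?_
    have hlift : M.mkQ (k • y) = (n : ℕ) • k • q := by rw [map_zsmul, hy, smul_comm]
    simpa only [h.zsmul, mul_div_assoc] using h.stableQuotientNorm_le_div n.pos hlift
  · refine le_stableQuotientNorm fun n y hn hy => ?_
    rcases eq_or_ne k 0 with rfl | hk
    · simpa using div_nonneg (h.nonneg y) n.cast_nonneg
    have hlift : M.mkQ (k • y) = (n * k.natAbs ^ 2) • q := by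
      rw [map_zsmul, hy, ← natCast_zsmul, ← natCast_zsmul, smul_smul, smul_smul]
      congr 1
      rw [Nat.cast_mul, Nat.cast_pow, Int.natAbs_sq]
      ring
    have hle := h.stableQuotientNorm_le_div (by positivity) hlift
    rw [h.zsmul, Nat.cast_mul, Nat.cast_pow, Nat.cast_natAbs, Int.cast_abs] at hle
    calc |(k : ℝ)| * stableQuotientNorm N M q
        ≤ |(k : ℝ)| * (|(k : ℝ)| * N y / (n * |(k : ℝ)| ^ 2)) := by gcongr
      _ = N y / n := by field_simp

lemma isZSeminorm_stableQuotientNorm (h : IsZSeminorm N) :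
    IsZSeminorm (stableQuotientNorm N M) :=
  ⟨h.stableQuotientNorm_add_le, h.stableQuotientNorm_zsmul⟩

end IsZSeminorm

end StableQuotientNorm

lemma mkQ_span_singleton_self {R A : Type*} [Ring R] [AddCommGroup A] [Module R A] (g : A) :
    (Submodule.span R {g}).mkQ g = 0 :=
  (Submodule.Quotient.mk_eq_zero _).2 (Submodule.mem_span_singleton_self g)

section LiftModSpan

variable {A : Type*} [AddCommGroup A] {N : A → ℝ}

/-- Lifting `q` to `x₀`, a near-optimal `y` satisfies `y = n • x₀ - k • g`; subtracting
`round (k / n) • g` from `x₀` costs at most half of `N g`. -/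
lemma IsZSeminorm.exists_lift_mod_span_le_add (h : IsZSeminorm N) (g : A)
    (q : A ⧸ Submodule.span ℤ {g}) {ε : ℝ} (hε : 0 < ε) :
    ∃ x, (Submodule.span ℤ {g}).mkQ x = q ∧ N x ≤ stableQuotientNorm N _ q + N g / 2 + ε := by
  obtain ⟨n, hn, y, hy, hlt⟩ := exists_div_lt_of_stableQuotientNorm_lt
    (lt_add_of_pos_right (stableQuotientNorm N _ q) hε)
  obtain ⟨x₀, rfl⟩ := Submodule.mkQ_surjective _ q
  obtain ⟨k, hk⟩ : ∃ k : ℤ, k • g = n • x₀ - y := by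
    rw [← Submodule.mem_span_singleton, ← Submodule.Quotient.mk_eq_zero, ← Submodule.mkQ_apply,
      map_sub, map_nsmul, hy, sub_self]
  have hn' : (0 : ℝ) < n := Nat.cast_pos.2 hn
  set t : ℤ := round ((k : ℝ) / n)
  refine ⟨x₀ - t • g, by rw [map_sub, map_zsmul, mkQ_span_singleton_self, smul_zero, sub_zero], ?_⟩
  have hround : |((k - n * t : ℤ) : ℝ)| ≤ n / 2 := by
    have hfactor : ((k - n * t : ℤ) : ℝ) = n * ((k : ℝ) / n - t) := by push_cast; field_simp
    rw [hfactor, abs_mul, Nat.abs_cast, div_eq_mul_one_div (n : ℝ)]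
    gcongr
    exact abs_sub_round _
  have hsplit : n • (x₀ - t • g) = y + (k - n * t) • g := by
    rw [sub_smul, hk, smul_sub, mul_smul, natCast_zsmul]
    abel
  have hle : n * N (x₀ - t • g) ≤ n * (N y / n + N g / 2) := calc
    n * N (x₀ - t • g) = N (y + (k - n * t) • g) := by rw [← h.nsmul, hsplit]
    _ ≤ N y + |((k - n * t : ℤ) : ℝ)| * N g := by
        simpa only [h.zsmul] using h.add_le y ((k - n * t) • g)
    _ ≤ N y + n / 2 * N g := by
        gcongr
        exact h.nonneg g
    _ = n * (N y / n + N g / 2) := by field_simp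
  linarith [le_of_mul_le_mul_left hle hn']

/-- A nonzero `x` has `N g ≤ N x`, so the error term `N g / 2` can be absorbed. -/
lemma IsZSeminorm.exists_lift_mod_span_le_mul (h : IsZSeminorm N) {g : A} (hg : 0 < N g)
    (hmin : ∀ x, x ≠ 0 → N g ≤ N x) (q : A ⧸ Submodule.span ℤ {g}) :
    ∃ x, (Submodule.span ℤ {g}).mkQ x = q ∧ N x ≤ 4 * stableQuotientNorm N _ q := by
  obtain ⟨x, hxq, hle⟩ := h.exists_lift_mod_span_le_add g q (ε := N g / 4) (by positivity)
  refine ⟨x, hxq, ?_⟩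
  rcases eq_or_ne x 0 with rfl | hx
  · rw [h.zero, ← hxq, map_zero, h.isZSeminorm_stableQuotientNorm.zero, mul_zero]
  · linarith [hmin x hx]

variable {M : Submodule ℤ A} {K : ℝ}

lemma IsLatticeNorm.isLatticeNorm_stableQuotientNorm (h : IsLatticeNorm N)
    (hlift : ∀ q, ∃ x, M.mkQ x = q ∧ N x ≤ K * stableQuotientNorm N M q) (hK : 0 ≤ K) :
    IsLatticeNorm (stableQuotientNorm N M) where
  toIsZSeminorm := h.isZSeminorm_stableQuotientNorm
  finite_le B := by
    refine ((h.finite_le (K * B)).image M.mkQ).subset fun q hq => ?_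
    obtain ⟨x, hxq, hle⟩ := hlift q
    exact ⟨x, hle.trans (mul_le_mul_of_nonneg_left hq hK), hxq⟩

lemma IsLatticeNorm.isTorsionFree_quotient [Module.IsTorsionFree ℤ A] (h : IsLatticeNorm N)
    (hlift : ∀ q, ∃ x, M.mkQ x = q ∧ N x ≤ K * stableQuotientNorm N M q) :
    Module.IsTorsionFree ℤ (A ⧸ M) := by
  refine h.isZSeminorm_stableQuotientNorm.isTorsionFree fun q hq => ?_
  obtain ⟨x, hxq, hle⟩ := hlift q
  have hx : x = 0 := by
    by_contra hx
    exact (h.pos hx).not_ge (by simpa [hq] using hle)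
  rw [← hxq, hx, map_zero]

end LiftModSpan

section ConsBasis

variable {R A : Type*} [Ring R] [AddCommGroup A] [Module R A] {r : ℕ} {g : A}

open Submodule in
lemma linearIndependent_cons_of_lift (hg : ∀ c : R, c • g = 0 → c = 0)
    (b : Module.Basis (Fin r) R (A ⧸ span R {g})) {x : Fin r → A}
    (hx : ∀ j, (span R {g}).mkQ (x j) = b j) :
    LinearIndependent R (Fin.cons g x : Fin (r + 1) → A) := by
  rw [Fintype.linearIndependent_iff]
  intro a ha
  rw [Fin.sum_univ_succ] at ha
  simp only [Fin.cons_zero, Fin.cons_succ] at ha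
  have hsucc : ∀ j : Fin r, a j.succ = 0 := by
    refine Fintype.linearIndependent_iff.1 b.linearIndependent (fun j => a j.succ) ?_
    simpa only [map_add, map_smul, map_sum, hx, mkQ_span_singleton_self, smul_zero, zero_add,
      map_zero] using congrArg (span R {g}).mkQ ha
  have hzero : a 0 = 0 := hg _ (by simpa [hsucc] using ha)
  exact Fin.cases hzero hsucc

open Submodule in
lemma span_cons_eq_top_of_lift (b : Module.Basis (Fin r) R (A ⧸ span R {g})) {x : Fin r → A}
    (hx : ∀ j, (span R {g}).mkQ (x j) = b j) :
    span R (Set.range (Fin.cons g x : Fin (r + 1) → A)) = ⊤ := by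
  have hrange : (span R {g}).mkQ '' Set.range x = Set.range b := by
    rw [← Set.range_comp]
    exact congrArg Set.range (funext hx)
  rw [Fin.range_cons, span_insert, ← map_mkQ_eq_top, map_span, hrange, b.span_eq]

end ConsBasis

/-- A family `x` is quasi-orthogonal with constant `c` for the seminorm `N` if the triangle
inequality for its integral combinations is sharp up to the factor `c`. -/
def IsQuasiOrthogonal {A ι : Type*} [AddCommGroup A] [Fintype ι] (N : A → ℝ) (c : ℝ) (x : ι → A) :
    Prop :=
  ∀ a : ι → ℤ, c * ∑ j, |(a j : ℝ)| * N (x j) ≤ N (∑ j, a j • x j)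

lemma IsQuasiOrthogonal.cons_of_lift {A B : Type*} [AddCommGroup A] [AddCommGroup B]
    {N : A → ℝ} {Q : B → ℝ} (hN : IsZSeminorm N) (π : A →ₗ[ℤ] B) (hπ : ∀ z, Q (π z) ≤ N z)
    {r : ℕ} {g : A} {x : Fin r → A} {y : Fin r → B} {c K : ℝ} (hc : 0 ≤ c) (hc1 : c ≤ 1)
    (hK : 0 ≤ K) (hg : π g = 0) (hxy : ∀ j, π (x j) = y j) (hle : ∀ j, N (x j) ≤ K * Q (y j))
    (hy : IsQuasiOrthogonal Q c y) :
    IsQuasiOrthogonal N (c / (1 + 2 * K)) (Fin.cons g x : Fin (r + 1) → A) := by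
  intro a
  simp only [Fin.sum_univ_succ, Fin.cons_zero, Fin.cons_succ]
  set z := ∑ j : Fin r, a j.succ • x j
  set S := ∑ j : Fin r, |(a j.succ : ℝ)| * N (x j)
  have htail : c * S ≤ K * N (a 0 • g + z) := calc
    c * S ≤ c * ∑ j : Fin r, |(a j.succ : ℝ)| * (K * Q (y j)) :=
        mul_le_mul_of_nonneg_left (Finset.sum_le_sum fun j _ =>
          mul_le_mul_of_nonneg_left (hle j) (abs_nonneg _)) hc
    _ = K * (c * ∑ j : Fin r, |(a j.succ : ℝ)| * Q (y j)) := by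
        simp only [Finset.mul_sum]
        exact Finset.sum_congr rfl fun j _ => by ring
    _ ≤ K * Q (∑ j : Fin r, a j.succ • y j) := by
        gcongr
        exact hy fun j => a j.succ
    _ = K * Q (π (a 0 • g + z)) := by simp [z, hg, hxy]
    _ ≤ K * N (a 0 • g + z) := by
        gcongr
        exact hπ _
  have hhead : |(a 0 : ℝ)| * N g ≤ N (a 0 • g + z) + S := calc
    |(a 0 : ℝ)| * N g = N ((a 0 • g + z) + -z) := by rw [add_neg_cancel_right, hN.zsmul]
    _ ≤ N (a 0 • g + z) + N z := by simpa only [hN.neg] using hN.add_le (a 0 • g + z) (-z)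
    _ ≤ N (a 0 • g + z) + S := by
        gcongr
        exact hN.sum_zsmul_le _ _ _
  rw [div_mul_eq_mul_div, div_le_iff₀ (by positivity)]
  calc c * (|(a 0 : ℝ)| * N g + S) ≤ c * (N (a 0 • g + z) + S + S) := by gcongr
    _ = c * N (a 0 • g + z) + 2 * (c * S) := by ring
    _ ≤ 1 * N (a 0 • g + z) + 2 * (K * N (a 0 • g + z)) := by
        gcongr
        exact hN.nonneg _
    _ = N (a 0 • g + z) * (1 + 2 * K) := by ring

lemma finrank_quotient_span_singleton {A : Type*} [AddCommGroup A] [Module.Finite ℤ A]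
    [Module.IsTorsionFree ℤ A] {g : A} (hg : g ≠ 0) :
    Module.finrank ℤ (A ⧸ Submodule.span ℤ {g}) + 1 = Module.finrank ℤ A := by
  rw [← Submodule.finrank_quotient_add_finrank (Submodule.span ℤ {g}),
    (LinearEquiv.toSpanNonzeroSingleton ℤ A g hg).finrank_eq.symm, Module.finrank_self]

/-- A shortest nonzero vector, completed by near-optimal lifts of a quasi-orthogonal basis of the
quotient by it. -/
theorem IsLatticeNorm.exists_basis_isQuasiOrthogonal (r : ℕ) : ∀ {A : Type*} [AddCommGroup A]
    [Module.Finite ℤ A] [Module.IsTorsionFree ℤ A] {N : A → ℝ}, IsLatticeNorm N →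
    Module.finrank ℤ A = r →
    ∃ b : Module.Basis (Fin r) ℤ A, IsQuasiOrthogonal N ((1 / 9) ^ r) b := by
  induction r with
  | zero =>
    intro A _ _ _ N h hr
    exact ⟨Module.finBasisOfFinrankEq ℤ A hr, fun a => by simp [h.zero]⟩
  | succ r ih =>
    intro A _ _ _ N h hr
    have : Nontrivial A := Module.nontrivial_of_finrank_pos (R := ℤ) (by omega)
    obtain ⟨g, hg, hmin⟩ := h.exists_ne_zero_forall_le
    have hlift := h.exists_lift_mod_span_le_mul (h.pos hg) hmin
    have := h.isTorsionFree_quotient hlift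
    have hrank : Module.finrank ℤ (A ⧸ Submodule.span ℤ {g}) = r := by
      have := finrank_quotient_span_singleton hg
      omega
    obtain ⟨b, hb⟩ := ih (h.isLatticeNorm_stableQuotientNorm hlift (by norm_num)) hrank
    choose x hxb hle using fun j => hlift (b j)
    have hg_smul (c : ℤ) (hc : c • g = 0) : c = 0 := (smul_eq_zero.1 hc).resolve_right hg
    refine ⟨.mk (linearIndependent_cons_of_lift hg_smul b hxb)
      (span_cons_eq_top_of_lift b hxb).ge, ?_⟩
    have hstep : IsQuasiOrthogonal N ((1 / 9) ^ r / (1 + 2 * 4)) (Fin.cons g x : Fin (r + 1) → A) :=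
      hb.cons_of_lift h.toIsZSeminorm _ h.stableQuotientNorm_mkQ_le (by positivity)
        (pow_le_one₀ (by norm_num) (by norm_num)) (by norm_num) (mkQ_span_singleton_self g) hxb hle
    rw [Module.Basis.coe_mk, pow_succ]
    convert hstep using 1
    ring

section

open Polynomial

section GaloisAverage

/-- Both sides count the pairs (automorphism, root), weighted by `f`: the Galois group acts
transitively on the roots and each automorphism permutes them. -/
lemma natDegree_mul_sum_algEquiv_apply {F K R : Type*} [Field F] [Field K] [Algebra F K]
    [FiniteDimensional F K] [Normal F K] [CommSemiring R] (f : K → R) (x : K) :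
    ((minpoly F x).natDegree : R) * ∑ σ : K ≃ₐ[F] K, f (σ x) =
      Fintype.card (K ≃ₐ[F] K) * (((minpoly F x).aroots K).map f).sum := by
  have hx : IsIntegral F x := Algebra.IsIntegral.isIntegral x
  set s := (minpoly F x).aroots K with hs
  have hcard : s.card = (minpoly F x).natDegree := by
    rw [hs, aroots, ← (Normal.splits inferInstance x).natDegree_eq_card_roots, natDegree_map]
  have horbit : ∀ a ∈ s, ∑ σ : K ≃ₐ[F] K, f (σ a) = ∑ σ : K ≃ₐ[F] K, f (σ x) := by
    intro a ha
    obtain ⟨τ, rfl⟩ := isConjRoot_iff_exists_algEquiv.1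
      ((isConjRoot_iff_mem_minpoly_aroots hx).2 ha).symm
    exact Equiv.sum_comp (Equiv.mulRight τ) fun σ : K ≃ₐ[F] K => f (σ x)
  have hperm (σ : K ≃ₐ[F] K) : s.map σ = s := by
    have hmap := (Normal.splits (inferInstance : Normal F K) x).roots_map (σ : K →+* K)
    have hcomp : (σ : K →+* K).comp (algebraMap F K) = algebraMap F K := RingHom.ext σ.commutes
    rw [Polynomial.map_map, hcomp] at hmap
    exact hmap.symm
  calc ((minpoly F x).natDegree : R) * ∑ σ : K ≃ₐ[F] K, f (σ x)
      = (s.map fun a => ∑ σ : K ≃ₐ[F] K, f (σ a)).sum := by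
        rw [Multiset.map_congr rfl horbit, Multiset.map_const', Multiset.sum_replicate, hcard,
          nsmul_eq_mul]
    _ = ∑ σ : K ≃ₐ[F] K, (s.map fun a => f (σ a)).sum := Multiset.sum_map_sum_map _ _
    _ = ∑ _σ : K ≃ₐ[F] K, (s.map f).sum := by
        refine Finset.sum_congr rfl fun σ _ => ?_
        conv_rhs => rw [← hperm σ, Multiset.map_map]
        rfl
    _ = Fintype.card (K ≃ₐ[F] K) * (s.map f).sum := by
        rw [Finset.sum_const, Finset.card_univ, nsmul_eq_mul]

end GaloisAverage

section GaussNorm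

variable {K : Type*} [Field K] {v : AbsoluteValue K ℝ}

lemma gaussNorm_X_sub_C (v : AbsoluteValue K ℝ) (a : K) :
    (X - C a).gaussNorm v 1 = max 1 (v a) := by
  apply le_antisymm
  · obtain ⟨i, hi⟩ := (X - C a).exists_eq_gaussNorm v 1
    rw [hi, one_pow, mul_one]
    rcases i with _ | _ | i <;> simp [coeff_X]
  · have h0 := (X - C a).le_gaussNorm v zero_le_one 0
    have h1 := (X - C a).le_gaussNorm v zero_le_one 1
    exact max_le (by simpa [coeff_C] using h1) (by simpa [coeff_X] using h0)

lemma gaussNorm_multiset_prod_X_sub_C (hv : IsNonarchimedean v) (s : Multiset K) :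
    (s.map fun a => X - C a).prod.gaussNorm v 1 = (s.map fun a => max 1 (v a)).prod := by
  induction s using Multiset.induction_on with
  | empty => simpa using gaussNorm_C v 1 (1 : K)
  | cons a s ih =>
    simp only [Multiset.map_cons, Multiset.prod_cons, gaussNorm_mul hv one_pos, gaussNorm_X_sub_C,
      ih]

lemma gaussNorm_eq_leadingCoeff_mul_prod_roots (hv : IsNonarchimedean v) {q : K[X]}
    (hq : q.Splits) :
    q.gaussNorm v 1 = v q.leadingCoeff * (q.roots.map fun a => max 1 (v a)).prod := by
  conv_lhs => rw [hq.eq_prod_roots]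
  rw [gaussNorm_mul hv one_pos, gaussNorm_multiset_prod_X_sub_C hv, gaussNorm_C]

/-- Bezout writes `1` as an integral combination of the coefficients, so they cannot all be small
at `v`. -/
lemma gaussNorm_map_intCast_of_isPrimitive (hv : IsNonarchimedean v) {p : ℤ[X]}
    (hp : p.IsPrimitive) : (p.map (Int.castRingHom K)).gaussNorm v 1 = 1 := by
  have hint (n : ℤ) : v (n : K) ≤ 1 := IsNonarchimedean.apply_intCast_le_one hv
  apply le_antisymm
  · obtain ⟨i, hi⟩ := (p.map (Int.castRingHom K)).exists_eq_gaussNorm v 1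
    rw [hi, one_pow, mul_one, coeff_map]
    exact hint _
  · obtain ⟨g, hg⟩ := Finset.gcd_eq_sum_mul p.support p.coeff
    have hone : ∑ i ∈ p.support, (p.coeff i : K) * (g i : K) = 1 := by
      rw [← content, hp.content_eq_one] at hg
      exact_mod_cast congrArg (Int.cast : ℤ → K) hg.symm
    obtain ⟨i, -, hi⟩ := IsNonarchimedean.finset_image_add (map_zero v) (apply_nonneg v) hv
      (fun i => (p.coeff i : K) * (g i : K)) p.support
    calc 1 ≤ v (p.coeff i : K) * v (g i : K) := by simpa only [hone, map_one, map_mul] using hi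
      _ ≤ v (p.coeff i : K) := mul_le_of_le_one_right (apply_nonneg v _) (hint _)
      _ ≤ (p.map (Int.castRingHom K)).gaussNorm v 1 := by
        simpa using (p.map (Int.castRingHom K)).le_gaussNorm v zero_le_one i

end GaussNorm

section PrimitiveScaling

/-- The common denominator of the coefficients of a rational polynomial, by which `weilHeight`
scales the minimal polynomial to an integer one. -/
def coeffDen (f : ℚ[X]) : ℕ :=
  f.support.lcm fun i => (f.coeff i).den

lemma coeffDen_pos (f : ℚ[X]) : 0 < coeffDen f :=
  Nat.pos_of_ne_zero (by simp [coeffDen, Finset.lcm_eq_zero_iff])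

lemma den_dvd_iff_mul_mem_range_intCast (x : ℚ) (n : ℤ) :
    (x.den : ℤ) ∣ n ↔ (n : ℚ) * x ∈ (Int.castRingHom ℚ).range := by
  constructor
  · rintro ⟨k, rfl⟩
    refine ⟨k * x.num, ?_⟩
    rw [eq_intCast, Int.cast_mul, ← Rat.mul_den_eq_num]
    push_cast
    ring
  · rintro ⟨m, hm⟩
    rcases eq_or_ne n 0 with rfl | hn
    · exact dvd_zero _
    have hx : x = Rat.divInt m n := by
      rw [← Rat.intCast_div_eq_divInt, eq_div_iff (by exact_mod_cast hn), mul_comm, ← hm,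
        eq_intCast]
    exact hx ▸ Rat.den_dvd m n

lemma coeffDen_dvd_iff_exists_map_eq (f : ℚ[X]) (n : ℤ) :
    (coeffDen f : ℤ) ∣ n ↔ ∃ p : ℤ[X], p.map (Int.castRingHom ℚ) = C (n : ℚ) * f := by
  have hcoeff (i : ℕ) : (C (n : ℚ) * f).coeff i ∈ Set.range (Int.castRingHom ℚ) ↔
      (f.coeff i).den ∣ n.natAbs := by
    rw [coeff_C_mul, ← RingHom.coe_range, SetLike.mem_coe, ← den_dvd_iff_mul_mem_range_intCast,
      Int.natCast_dvd]
  refine Iff.trans ?_ ((forall_congr' hcoeff).symm.trans (lifts_iff_coeff_lifts _).symm)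
  rw [Int.natCast_dvd, coeffDen, Finset.lcm_dvd_iff]
  refine forall_congr' fun i => ⟨fun h => ?_, fun h _ => h⟩
  by_cases hi : i ∈ f.support
  · exact h hi
  · simp [notMem_support_iff.1 hi]

/-- If `e` divides `p`, then `p / e` is a constant multiple of `f`, and the constant
`coeffDen f / e` is still a multiple of `coeffDen f`. -/
lemma isPrimitive_of_map_eq_coeffDen_mul {f : ℚ[X]} (hf : f.Monic) {p : ℤ[X]}
    (hp : p.map (Int.castRingHom ℚ) = C (coeffDen f : ℚ) * f) : p.IsPrimitive := by
  rw [isPrimitive_iff_isUnit_of_C_dvd]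
  rintro e ⟨q, rfl⟩
  rw [Polynomial.map_mul, map_C, eq_intCast] at hp
  have hlead : e * q.leadingCoeff = coeffDen f := by
    have h := congrArg leadingCoeff hp
    rw [leadingCoeff_mul, leadingCoeff_mul, leadingCoeff_C, leadingCoeff_C, hf.leadingCoeff,
      mul_one, leadingCoeff_map_of_injective (RingHom.injective_int _), eq_intCast] at h
    exact_mod_cast h
  have hD : (coeffDen f : ℤ) ≠ 0 := by exact_mod_cast (coeffDen_pos f).ne'
  have he : (e : ℚ) ≠ 0 := by
    rintro he
    simp [Int.cast_eq_zero.1 he, hD.symm] at hlead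
  have hq : q.map (Int.castRingHom ℚ) = C (q.leadingCoeff : ℚ) * f := by
    refine mul_left_cancel₀ (C_ne_zero.2 he) (hp.trans ?_)
    rw [← mul_assoc, ← C_mul, ← Int.cast_mul, hlead, Int.cast_natCast]
  obtain ⟨w, hw⟩ := (coeffDen_dvd_iff_exists_map_eq f _).2 ⟨q, hq⟩
  refine IsUnit.of_mul_eq_one w (mul_left_cancel₀ hD ?_)
  rw [mul_one]
  nth_rw 2 [← hlead]
  rw [hw]
  ring

lemma map_intCast_eq_C_natCast_mul {f : ℚ[X]} {p : ℤ[X]} {n : ℕ}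
    (hp : p.map (Int.castRingHom ℚ) = C (n : ℚ) * f) (L : Type*) [Field L] [Algebra ℚ L] :
    p.map (Int.castRingHom L) = C (n : L) * f.map (algebraMap ℚ L) := by
  have h := congrArg (Polynomial.map (algebraMap ℚ L)) hp
  rwa [Polynomial.map_map, RingHom.ext_int ((algebraMap ℚ L).comp _) (Int.castRingHom L),
    Polynomial.map_mul, map_C, map_natCast] at h

end PrimitiveScaling

section RootHeights

open NumberField Real Height

lemma multiset_sum_map_finsum {α β M : Type*} [AddCommMonoid M] (s : Multiset α) (f : α → β → M)
    (hf : ∀ a, (f a).HasFiniteSupport) :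
    (s.map fun a => ∑ᶠ b, f a b).sum = ∑ᶠ b, (s.map fun a => f a b).sum := by
  classical
  have hsum (F : α → M) : (s.map F).sum = ∑ a : s, F a :=
    (congrArg Multiset.sum (Multiset.map_univ s F)).symm
  simp only [hsum]
  exact (finsum_sum_comm Finset.univ (fun b (a : s) => f a b) fun a _ => hf a).symm

variable {K : Type*} [Field K] {p : ℤ[X]}

lemma sum_posLog_infinitePlace_roots (hsplit : (p.map (Int.castRingHom K)).Splits)
    (v : InfinitePlace K) :
    ((p.map (Int.castRingHom K)).roots.map fun a => log⁺ (v a)).sum =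
      ((p.map (Int.castRingHom ℂ)).roots.map fun z => log⁺ ‖z‖).sum := by
  have hroots := hsplit.roots_map v.embedding
  rw [Polynomial.map_map, RingHom.ext_int (v.embedding.comp _) (Int.castRingHom ℂ)] at hroots
  simp only [hroots, Multiset.map_map, Function.comp_apply, v.norm_embedding_eq]

variable [NumberField K]

lemma hasFiniteSupport_posLog_finitePlace (x : K) :
    Function.HasFiniteSupport fun v : FinitePlace K => log⁺ (v x) := by
  rcases eq_or_ne x 0 with rfl | hx
  · simp [Function.HasFiniteSupport, Function.support]
  · refine (FinitePlace.hasFiniteMulSupport hx).subset fun v hv h1 => hv ?_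
    simp only [h1, posLog_one]

lemma finsum_log_finitePlace_intCast {n : ℤ} (hn : n ≠ 0) :
    ∑ᶠ v : FinitePlace K, log (v (n : K)) = -(Module.finrank ℚ K * log |(n : ℝ)|) := by
  have hnK : (n : K) ≠ 0 := Int.cast_ne_zero.2 hn
  have hnorm : Algebra.norm ℚ (n : K) = (n : ℚ) ^ Module.finrank ℚ K := by
    simpa using Algebra.norm_algebraMap (S := K) (n : ℚ)
  rw [← log_finprod fun v => FinitePlace.pos_iff.2 hnK, FinitePlace.prod_eq_inv_abs_norm hnK, hnorm]
  simp [log_inv]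

lemma sum_posLog_finitePlace_roots (hp : p.IsPrimitive)
    (hsplit : (p.map (Int.castRingHom K)).Splits) (v : FinitePlace K) :
    ((p.map (Int.castRingHom K)).roots.map fun a => log⁺ (v a)).sum =
      -log (v (p.leadingCoeff : K)) := by
  have hv : IsNonarchimedean v.val := FinitePlace.add_le v
  have hlead : v (p.leadingCoeff : K) ≠ 0 := (FinitePlace.pos_iff.2 (Int.cast_ne_zero.2
    (leadingCoeff_ne_zero.2 hp.ne_zero))).ne'
  have hpos : ∀ t ∈ (p.map (Int.castRingHom K)).roots.map fun a => max 1 (v a), t ≠ 0 := by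
    simp only [Multiset.mem_map]
    rintro _ ⟨a, -, rfl⟩
    positivity
  have hgauss := gaussNorm_eq_leadingCoeff_mul_prod_roots hv hsplit
  rw [gaussNorm_map_intCast_of_isPrimitive hv hp,
    leadingCoeff_map_of_injective (RingHom.injective_int _), eq_intCast] at hgauss
  have hlog := congrArg log hgauss
  simp only [← FinitePlace.coe_apply] at hlog
  rw [log_one, log_mul hlead (Multiset.prod_ne_zero fun h => hpos 0 h rfl), log_multiset_prod hpos,
    Multiset.map_map] at hlog
  simp only [posLog_eq_log_max_one (apply_nonneg v _)]
  exact (neg_eq_of_add_eq_zero_right hlog.symm).symm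

/-- The infinite places contribute the roots and, by the product formula, the finite places the
leading coefficient. -/
theorem sum_logHeight₁_roots_eq_finrank_mul_logMahlerMeasure (hp : p.IsPrimitive)
    (hsplit : (p.map (Int.castRingHom K)).Splits) :
    ((p.map (Int.castRingHom K)).roots.map logHeight₁).sum =
      Module.finrank ℚ K * (p.map (Int.castRingHom ℂ)).logMahlerMeasure := by
  have hlead : p.leadingCoeff ≠ 0 := leadingCoeff_ne_zero.2 hp.ne_zero
  have hinf := calc
    ((p.map (Int.castRingHom K)).roots.map fun a =>
        ∑ v : InfinitePlace K, (v.mult : ℝ) * log⁺ (v a)).sum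
      = ∑ v : InfinitePlace K,
          ((p.map (Int.castRingHom K)).roots.map fun a => (v.mult : ℝ) * log⁺ (v a)).sum :=
        Multiset.sum_map_sum_map _ _
    _ = Module.finrank ℚ K * ((p.map (Int.castRingHom ℂ)).roots.map fun z => log⁺ ‖z‖).sum := by
        simp only [Multiset.sum_map_mul_left, sum_posLog_infinitePlace_roots hsplit]
        rw [← Finset.sum_mul, ← InfinitePlace.sum_mult_eq (K := K), Nat.cast_sum]
  have hfin : ((p.map (Int.castRingHom K)).roots.map fun a =>
      ∑ᶠ v : FinitePlace K, log⁺ (v a)).sum = Module.finrank ℚ K * log |(p.leadingCoeff : ℝ)| := by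
    rw [multiset_sum_map_finsum _ _ hasFiniteSupport_posLog_finitePlace]
    simp only [sum_posLog_finitePlace_roots hp hsplit]
    rw [finsum_neg_distrib, finsum_log_finitePlace_intCast hlead, neg_neg]
  rw [Multiset.map_congr rfl fun a _ => NumberField.logHeight₁_eq a, Multiset.sum_map_add, hinf,
    hfin, logMahlerMeasure_eq_log_leadingCoeff_add_sum_log_roots,
    leadingCoeff_map_of_injective (RingHom.injective_int _), eq_intCast, Complex.norm_intCast]
  ring

end RootHeights

section WeilHeight

open NumberField Real Height

instance : IsGalois ℚ Qbar := by
  -- Unification does not identify the two `ℚ`-algebra structures on `AlgebraicClosure ℚ`.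
  have hinst : (DivisionRing.toRatAlgebra : Algebra ℚ Qbar) = AlgebraicClosure.instAlgebra ℚ :=
    Subsingleton.elim _ _
  have : Algebra.IsAlgebraic ℚ Qbar := hinst ▸ AlgebraicClosure.isAlgebraic ℚ
  have : IsAlgClosure ℚ Qbar := ⟨inferInstance, this⟩
  infer_instance

lemma natDegree_mul_weilHeight_eq_logMahlerMeasure (x : Qbar) {p : ℤ[X]}
    (hp : p.map (Int.castRingHom ℚ) = C (coeffDen (minpoly ℚ x) : ℚ) * minpoly ℚ x) :
    (minpoly ℚ x).natDegree * weilHeight x = (p.map (Int.castRingHom ℂ)).logMahlerMeasure := by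
  have hx : IsIntegral ℚ x := Algebra.IsIntegral.isIntegral x
  have hD : (coeffDen (minpoly ℚ x) : ℂ) ≠ 0 := Nat.cast_ne_zero.2 (coeffDen_pos _).ne'
  have hlead : ((minpoly ℚ x).map (algebraMap ℚ ℂ)).leadingCoeff = 1 :=
    (minpoly.monic hx).map (algebraMap ℚ ℂ)
  rw [logMahlerMeasure_eq_log_leadingCoeff_add_sum_log_roots, map_intCast_eq_C_natCast_mul hp ℂ,
    leadingCoeff_C_mul_of_isUnit hD.isUnit, hlead, mul_one, Complex.norm_natCast, roots_C_mul _ hD,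
    weilHeight, mul_div_cancel₀ _ (Nat.cast_ne_zero.2 (minpoly.natDegree_pos hx).ne')]
  simp only [posLog_eq_log_max_one (norm_nonneg _)]
  rfl

variable {K : IntermediateField ℚ Qbar} [NumberField K] [IsGalois ℚ K]

theorem sum_logHeight₁_algEquiv_eq_finrank_sq_mul_weilHeight (x : K) :
    ∑ σ : K ≃ₐ[ℚ] K, logHeight₁ (σ x) = (Module.finrank ℚ K : ℝ) ^ 2 * weilHeight x := by
  have hx : IsIntegral ℚ x := Algebra.IsIntegral.isIntegral x
  have hmin : minpoly ℚ (x : Qbar) = minpoly ℚ x :=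
    minpoly.algebraMap_eq (algebraMap K Qbar).injective x
  obtain ⟨p, hp⟩ := (coeffDen_dvd_iff_exists_map_eq (minpoly ℚ x) _).1 dvd_rfl
  rw [Int.cast_natCast] at hp
  have hD : (coeffDen (minpoly ℚ x) : K) ≠ 0 := Nat.cast_ne_zero.2 (coeffDen_pos _).ne'
  have hpK := map_intCast_eq_C_natCast_mul hp K
  have hsplit : (p.map (Int.castRingHom K)).Splits :=
    hpK ▸ (Splits.C _).mul (Normal.splits inferInstance x)
  have hroots := sum_logHeight₁_roots_eq_finrank_mul_logMahlerMeasure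
    (isPrimitive_of_map_eq_coeffDen_mul (minpoly.monic hx) hp) hsplit
  rw [hpK, roots_C_mul _ hD,
    ← natDegree_mul_weilHeight_eq_logMahlerMeasure (x : Qbar) (by rwa [hmin]), hmin] at hroots
  have hdeg : ((minpoly ℚ x).natDegree : ℝ) ≠ 0 :=
    Nat.cast_ne_zero.2 (minpoly.natDegree_pos hx).ne'
  refine mul_left_cancel₀ hdeg ?_
  rw [natDegree_mul_sum_algEquiv_apply, aroots, hroots, ← Nat.card_eq_fintype_card,
    IsGalois.card_aut_eq_finrank]
  ring

lemma weilHeight_eq_sum_div (x : K) : weilHeight x =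
    (∑ σ : K ≃ₐ[ℚ] K, logHeight₁ (σ x)) / (Module.finrank ℚ K : ℝ) ^ 2 := by
  have hn : (Module.finrank ℚ K : ℝ) ≠ 0 := Nat.cast_ne_zero.2 Module.finrank_pos.ne'
  rw [sum_logHeight₁_algEquiv_eq_finrank_sq_mul_weilHeight,
    mul_div_cancel_left₀ _ (pow_ne_zero 2 hn)]

variable (K) in
lemma finite_setOf_weilHeight_le (B : ℝ) : {x : Qbar | x ∈ K ∧ weilHeight x ≤ B}.Finite := by
  have hn : (0 : ℝ) < (Module.finrank ℚ K : ℝ) ^ 2 :=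
    pow_pos (Nat.cast_pos.2 Module.finrank_pos) 2
  refine ((NumberField.finite_setOfPred_logHeight₁_le K
    ((Module.finrank ℚ K : ℝ) ^ 2 * B)).image (algebraMap K Qbar)).subset ?_
  rintro x ⟨hxK, hxB⟩
  refine ⟨⟨x, hxK⟩, ?_, rfl⟩
  calc logHeight₁ (⟨x, hxK⟩ : K) ≤ ∑ σ : K ≃ₐ[ℚ] K, logHeight₁ (σ ⟨x, hxK⟩) :=
        Finset.single_le_sum (f := fun σ : K ≃ₐ[ℚ] K => logHeight₁ (σ ⟨x, hxK⟩))
          (fun _ _ => zero_le_logHeight₁ _) (Finset.mem_univ 1)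
    _ = (Module.finrank ℚ K : ℝ) ^ 2 * weilHeight x :=
        sum_logHeight₁_algEquiv_eq_finrank_sq_mul_weilHeight _
    _ ≤ (Module.finrank ℚ K : ℝ) ^ 2 * B := by gcongr

lemma exists_isGalois_subset (s : Set Qbar) [Finite s] :
    ∃ K : IntermediateField ℚ Qbar, NumberField K ∧ IsGalois ℚ K ∧ s ⊆ K :=
  let K := FiniteGaloisIntermediateField.adjoin ℚ s
  ⟨K.toIntermediateField, {}, K.isGalois, FiniteGaloisIntermediateField.subset_adjoin ℚ s⟩

lemma weilHeight_mul_le (x y : Qbar) : weilHeight (x * y) ≤ weilHeight x + weilHeight y := by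
  obtain ⟨K, _, _, hK⟩ := exists_isGalois_subset {x, y}
  lift x to K using hK (by simp)
  lift y to K using hK (by simp)
  rw [← MulMemClass.coe_mul]
  simp only [weilHeight_eq_sum_div, ← add_div, ← Finset.sum_add_distrib, map_mul]
  gcongr
  exact logHeight₁_mul_le _ _

lemma weilHeight_zpow (x : Qbar) (n : ℤ) : weilHeight (x ^ n) = |(n : ℝ)| * weilHeight x := by
  obtain ⟨K, _, _, hK⟩ := exists_isGalois_subset {x}
  lift x to K using hK rfl
  have hcoe : (x : Qbar) ^ n = (x ^ n : K) := (map_zpow₀ (algebraMap K Qbar) x n).symm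
  rw [hcoe]
  simp only [weilHeight_eq_sum_div, map_zpow₀, logHeight₁_zpow, Nat.cast_natAbs, Int.cast_abs,
    ← Finset.mul_sum, mul_div_assoc]

end WeilHeight

end

section FreePart

lemma toMul_linearCombination_ofMul {ι G : Type*} [Fintype ι] [CommGroup G] (g : ι → G)
    (m : ι → ℤ) : (Fintype.linearCombination ℤ (fun i => Additive.ofMul (g i)) m).toMul =
      ∏ i, g i ^ m i := by
  simp [Fintype.linearCombination_apply]

lemma prod_zpow_sum_zsmul {ι κ G : Type*} [Fintype ι] [Fintype κ] [CommGroup G] (g : ι → G)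
    (a : κ → ℤ) (m : κ → ι → ℤ) :
    ∏ i, g i ^ (∑ j, a j • m j) i = ∏ j, (∏ i, g i ^ m j i) ^ a j := by
  simp only [← toMul_linearCombination_ofMul g, map_sum, map_zsmul, toMul_sum, toMul_zsmul]

variable {r : ℕ} {Γ : Subgroup Qbarˣ} {g : Fin r → Qbarˣ}

namespace IsFreePart

lemma prod_zpow_mem (h : IsFreePart Γ g) (m : Fin r → ℤ) : ∏ j, g j ^ m j ∈ Γ :=
  Γ.prod_mem fun j _ => Γ.zpow_mem (h.1 j) (m j)

lemma prod_zpow_injective (h : IsFreePart Γ g) :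
    Function.Injective fun m : Fin r → ℤ => ∏ j, g j ^ m j := fun m _ hmn =>
  (h.2 _ (h.prod_zpow_mem m)).unique ⟨1, Γ.one_mem, ⟨1, le_rfl, one_pow 1⟩, (one_mul _).symm⟩
    ⟨1, Γ.one_mem, ⟨1, le_rfl, one_pow 1⟩, hmn.trans (one_mul _).symm⟩

lemma change_basis (h : IsFreePart Γ g) (b : Module.Basis (Fin r) ℤ (Fin r → ℤ)) :
    IsFreePart Γ fun j => ∏ i, g i ^ b j i := by
  refine ⟨fun j => h.prod_zpow_mem (b j), fun x hx => ?_⟩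
  simp only [← prod_zpow_sum_zsmul, ← b.equivFun_symm_apply]
  exact (b.equivFun.symm.bijective.existsUnique_iff).1 (h.2 x hx)

lemma isLatticeNorm_weilHeight (h : IsFreePart Γ g) :
    IsLatticeNorm fun m : Fin r → ℤ => weilHeight ((∏ j, g j ^ m j : Qbarˣ) : Qbar) where
  add_le m n := by
    simpa only [Pi.add_apply, zpow_add, Finset.prod_mul_distrib, Units.val_mul] using
      weilHeight_mul_le _ _
  zsmul k m := by
    simpa only [Pi.smul_apply, smul_eq_mul, zpow_mul', Finset.prod_zpow,
      Units.val_zpow_eq_zpow_val] using weilHeight_zpow _ k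
  finite_le B := by
    obtain ⟨K, _, _, hK⟩ := exists_isGalois_subset (Set.range fun j => (g j : Qbar))
    refine ((finite_setOf_weilHeight_le K B).preimage
      (Units.val_injective.comp h.prod_zpow_injective).injOn).subset fun m hm => ⟨?_, hm⟩
    simp only [Function.comp_apply, Units.coe_prod, Units.val_zpow_eq_zpow_val]
    exact prod_mem fun j _ => zpow_mem (hK ⟨j, rfl⟩) (m j)

end IsFreePart

end FreePart

theorem schlickewei_generators_general {r : ℕ} {Γ : Subgroup Qbarˣ}
    (hΓ : ∃ g₀ : Fin r → Qbarˣ, IsFreePart Γ g₀) :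
    ∃ g : Fin r → Qbarˣ, IsFreePart Γ g ∧ ∀ b : Fin r → ℤ,
      (1 / 9) ^ r * ∑ j, |(b j : ℝ)| * weilHeight (g j : Qbar) ≤
        weilHeight ((∏ j, g j ^ b j : Qbarˣ) : Qbar) := by
  obtain ⟨g₀, h⟩ := hΓ
  obtain ⟨b, hb⟩ := h.isLatticeNorm_weilHeight.exists_basis_isQuasiOrthogonal r
    (Module.finrank_fin_fun ℤ)
  refine ⟨_, h.change_basis b, fun a => ?_⟩
  simpa only [← prod_zpow_sum_zsmul] using hb a

/-- Schlickewei. -/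
theorem schlickewei_generators (r : ℕ) :
    ∃ c : ℝ, 0 < c ∧ ∀ Γ : Subgroup Qbarˣ, Γ.FG →
      (∃ g₀ : Fin r → Qbarˣ, IsFreePart Γ g₀) →
      ∃ g : Fin r → Qbarˣ, IsFreePart Γ g ∧
        ∀ b : Fin r → ℤ,
          c * ∑ j, |(b j : ℝ)| * weilHeight (g j : Qbar) ≤
            weilHeight ((∏ j, g j ^ b j : Qbarˣ) : Qbar) :=
  ⟨(1 / 9) ^ r, by positivity, fun _ _ hΓ => schlickewei_generators_general hΓ⟩

end
end
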